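/- (Elliptic beta integral) Let p, q be complex numbers with 0 < |p| < 1, 0 < |q| < 1, and let t₁,…,t₆ be nonzero complex numbers with |tⱼ| < 1 for all j and t₁t₂t₃t₄t₅t₆ = pq. Then ((p;p)_∞(q;q)_∞/(4πi)) ∮_{|z|=1} [∏_{j=1}^{6} Γ(tⱼz;p,q)Γ(tⱼz^{−1};p,q)] / [Γ(z²;p,q)Γ(z^{−2};p,q)] dz/z = ∏_{1≤j<k≤6} Γ(tⱼt_k;p,q), where the integral is over the positively oriented unit circle. -/

import Mathlib

open Complex Real Filter Topology

/-- The infinite q-Pochhammer symbol (z;q)_inf. -/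
noncomputable def qpoch (z q : ℂ) : ℂ := ∏' j : ℕ, (1 - z * q ^ j)

/-- The elliptic gamma function Γ(z;p,q). -/
noncomputable def egamma (z p q : ℂ) : ℂ :=
  ∏' jk : ℕ × ℕ, (1 - z⁻¹ * p ^ (jk.1 + 1) * q ^ (jk.2 + 1)) / (1 - z * p ^ jk.1 * q ^ jk.2)

/-- The short Jacobi theta function θ(z;p) (base first argument). -/
noncomputable def theta (p z : ℂ) : ℂ := qpoch z p * qpoch (p * z⁻¹) p

/-- The constant κ = (p;p)_∞ (q;q)_∞ / (4πi). -/
noncomputable def kappa (p q : ℂ) : ℂ := qpoch p p * qpoch q q / (4 * (Real.pi : ℂ) * Complex.I)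

/-!
The ratio of the two sides is unchanged when a factor `q` moves from one parameter to another. For
the right-hand side this is the functional equation of `Γ`; for the left-hand side, a theta function
identity shows that the corresponding combination of integrands has the form `f (q z) - f z`, which
integrates to zero. With all but one parameter fixed and the last one determined by balancing, the
ratio is thus a holomorphic function on an annulus that is invariant under `x ↦ q x`. If the annulus
is wide enough to contain a fundamental domain, the modulus has a local maximum there, so the
function is constant; the identity theorem extends this to all admissible parameters. The constant
is found in a limit where two pairs of poles pinch the unit circle: the integrand concentrates like
a Poisson kernel at `± I`, and the right-hand side diverges at the same rate.
-/

section InfiniteProducts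

variable {ι : Type*} {a : ι → ℂ}

lemma summable_norm_neg_mul (ha : Summable fun i ↦ ‖a i‖) (z : ℂ) :
    Summable fun i ↦ ‖-(z * a i)‖ := by
  simpa only [norm_neg, norm_mul] using ha.mul_left ‖z‖

lemma multipliable_one_sub_mul (ha : Summable fun i ↦ ‖a i‖) (z : ℂ) :
    Multipliable fun i ↦ 1 - z * a i := by
  simpa only [sub_eq_add_neg] using
    multipliable_one_add_of_summable (summable_norm_neg_mul ha z)

lemma tprod_one_sub_mul_ne_zero (ha : Summable fun i ↦ ‖a i‖) {z : ℂ}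
    (h : ∀ i, 1 - z * a i ≠ 0) : ∏' i, (1 - z * a i) ≠ 0 := by
  simp only [sub_eq_add_neg] at h ⊢
  exact tprod_one_add_ne_zero_of_summable h (summable_norm_neg_mul ha z)

lemma differentiable_tprod_one_sub_mul (ha : Summable fun i ↦ ‖a i‖) :
    Differentiable ℂ fun z ↦ ∏' i, (1 - z * a i) := by
  have hprod : HasProdLocallyUniformlyOn (fun i z ↦ 1 + -(z * a i))
      (fun z ↦ ∏' i, (1 + -(z * a i))) Set.univ := by
    refine hasProdLocallyUniformlyOn_of_forall_compact isOpen_univ fun K _ hK ↦ ?_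
    obtain ⟨C, hC⟩ := hK.exists_bound_of_continuousOn (f := fun z : ℂ ↦ z) continuousOn_id
    refine (ha.mul_left C).hasProdUniformlyOn_one_add hK (.of_forall fun i z hz ↦ ?_)
      fun _ ↦ by fun_prop
    rw [norm_neg, norm_mul]
    exact mul_le_mul_of_nonneg_right (hC z hz) (norm_nonneg _)
  simp only [sub_eq_add_neg]
  refine differentiableOn_univ.1 (hprod.differentiableOn (.of_forall fun _ ↦ ?_) isOpen_univ)
  simpa only [Finset.prod_fn] using DifferentiableOn.finsetProd fun _ _ ↦ by fun_prop

end InfiniteProducts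

/-- The double product `∏_{j,k ≥ 0} (1 - z p^j q^k)`, the building block of `egamma`. -/
noncomputable def doublePoch (p q z : ℂ) : ℂ :=
  ∏' jk : ℕ × ℕ, (1 - z * (p ^ jk.1 * q ^ jk.2))

section QProducts

variable {p q z : ℂ}

lemma one_sub_ne_zero_of_norm_lt_one (hz : ‖z‖ < 1) : 1 - z ≠ 0 :=
  sub_ne_zero.2 fun h ↦ by simp [← h] at hz

lemma norm_mul_inv_lt_one (h : ‖p‖ < ‖z‖) : ‖p * z⁻¹‖ < 1 := by
  rw [norm_mul, norm_inv, ← div_eq_mul_inv]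
  exact (div_lt_one ((norm_nonneg p).trans_lt h)).2 h

lemma norm_mul_lt_one_of_le_one (hp : ‖p‖ < 1) (hz : ‖z‖ ≤ 1) : ‖p * z‖ < 1 := by
  rw [norm_mul]
  exact mul_lt_one_of_nonneg_of_lt_one_left (norm_nonneg p) hp hz

lemma norm_mul_lt_one (hp : ‖p‖ < 1) (hq : ‖q‖ < 1) : ‖p * q‖ < 1 :=
  norm_mul_lt_one_of_le_one hp hq.le

lemma summable_norm_pow (hp : ‖p‖ < 1) : Summable fun j : ℕ ↦ ‖p ^ j‖ := by
  simpa only [norm_pow] using summable_geometric_of_lt_one (norm_nonneg p) hp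

lemma summable_norm_pow_mul_pow (hp : ‖p‖ < 1) (hq : ‖q‖ < 1) :
    Summable fun jk : ℕ × ℕ ↦ ‖p ^ jk.1 * q ^ jk.2‖ := by
  simpa only [norm_mul] using (summable_norm_pow hp).mul_of_nonneg (summable_norm_pow hq)
    (fun _ ↦ norm_nonneg _) fun _ ↦ norm_nonneg _

lemma differentiable_qpoch (hp : ‖p‖ < 1) : Differentiable ℂ fun z ↦ qpoch z p :=
  differentiable_tprod_one_sub_mul (summable_norm_pow hp)

lemma differentiable_doublePoch (hp : ‖p‖ < 1) (hq : ‖q‖ < 1) :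
    Differentiable ℂ (doublePoch p q) :=
  differentiable_tprod_one_sub_mul (summable_norm_pow_mul_pow hp hq)

lemma qpoch_ne_zero (hp : ‖p‖ < 1) (hz : ‖z‖ < 1) : qpoch z p ≠ 0 := by
  refine tprod_one_sub_mul_ne_zero (summable_norm_pow hp) fun j ↦
    one_sub_ne_zero_of_norm_lt_one ?_
  rw [norm_mul, norm_pow]
  exact mul_lt_one_of_nonneg_of_lt_one_left (norm_nonneg z) hz
    (pow_le_one₀ (norm_nonneg p) hp.le)

lemma doublePoch_ne_zero (hp : ‖p‖ < 1) (hq : ‖q‖ < 1) (hz : ‖z‖ < 1) :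
    doublePoch p q z ≠ 0 := by
  refine tprod_one_sub_mul_ne_zero (summable_norm_pow_mul_pow hp hq) fun jk ↦
    one_sub_ne_zero_of_norm_lt_one ?_
  rw [norm_mul, norm_mul, norm_pow, norm_pow]
  exact mul_lt_one_of_nonneg_of_lt_one_left (norm_nonneg z) hz
    (mul_le_one₀ (pow_le_one₀ (norm_nonneg p) hp.le) (by positivity)
      (pow_le_one₀ (norm_nonneg q) hq.le))

lemma qpoch_eq_mul (hp : ‖p‖ < 1) (z : ℂ) : qpoch z p = (1 - z) * qpoch (p * z) p := by
  have hshift (j : ℕ) : 1 - z * p ^ (j + 1) = 1 - p * z * p ^ j := by ring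
  have hmul := multipliable_one_sub_mul (summable_norm_pow hp) (p * z)
  unfold qpoch
  rw [tprod_eq_zero_mul' (by simpa only [hshift] using hmul)]
  simp only [hshift, pow_zero, mul_one]

lemma doublePoch_comm (p q z : ℂ) : doublePoch p q z = doublePoch q p z := by
  unfold doublePoch
  rw [← (Equiv.prodComm ℕ ℕ).tprod_eq]
  exact tprod_congr fun jk ↦ by rw [mul_comm (p ^ _)]; rfl

lemma hasProd_qpoch (hp : ‖p‖ < 1) (hq : ‖q‖ < 1) (z : ℂ) :
    HasProd (fun j : ℕ ↦ qpoch (z * p ^ j) q) (doublePoch p q z) := by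
  refine (multipliable_one_sub_mul (summable_norm_pow_mul_pow hp hq) z).hasProd.prod_fiberwise
    fun j ↦ ?_
  simpa only [mul_assoc, qpoch] using
    (multipliable_one_sub_mul (summable_norm_pow hq) (z * p ^ j)).hasProd

lemma doublePoch_eq_qpoch_mul_left (hp : ‖p‖ < 1) (hq : ‖q‖ < 1) (z : ℂ) :
    doublePoch p q z = qpoch z q * doublePoch p q (p * z) := by
  have hshift (j : ℕ) : z * p ^ (j + 1) = p * z * p ^ j := by ring
  have hmul := hasProd_qpoch hp hq (p * z)
  rw [← (hasProd_qpoch hp hq z).tprod_eq, ← hmul.tprod_eq,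
    tprod_eq_zero_mul' (by simpa only [hshift] using hmul.multipliable)]
  simp only [hshift, pow_zero, mul_one]

lemma doublePoch_eq_qpoch_mul_right (hp : ‖p‖ < 1) (hq : ‖q‖ < 1) (z : ℂ) :
    doublePoch p q z = qpoch z p * doublePoch p q (q * z) := by
  rw [doublePoch_comm, doublePoch_eq_qpoch_mul_left hq hp, doublePoch_comm]

end QProducts

section Theta

variable {p z : ℂ}

lemma theta_inv (hp : ‖p‖ < 1) (hz : z ≠ 0) : theta p z⁻¹ = -theta p z / z := by
  unfold theta
  rw [inv_inv, qpoch_eq_mul hp z, qpoch_eq_mul hp z⁻¹]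
  field_simp
  ring

lemma theta_div_self (hp0 : p ≠ 0) (z : ℂ) : theta p (p / z) = theta p z := by
  unfold theta
  rw [inv_div, mul_comm, mul_div_cancel₀ _ hp0, div_eq_mul_inv]

lemma theta_self_mul (hp0 : p ≠ 0) (hp : ‖p‖ < 1) (hz : z ≠ 0) :
    theta p (p * z) = -theta p z / z := by
  rw [← theta_inv hp hz, ← theta_div_self hp0 z⁻¹, div_inv_eq_mul]

lemma theta_one (hp : ‖p‖ < 1) : theta p 1 = 0 := by
  simp [theta, qpoch_eq_mul hp 1]

lemma theta_ne_zero (hp : ‖p‖ < 1) (hpz : ‖p‖ < ‖z‖) (hz : ‖z‖ < 1) : theta p z ≠ 0 :=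
  mul_ne_zero (qpoch_ne_zero hp hz) (qpoch_ne_zero hp (norm_mul_inv_lt_one hpz))

lemma differentiableAt_theta (hp : ‖p‖ < 1) (hz : z ≠ 0) : DifferentiableAt ℂ (theta p) z :=
  (differentiable_qpoch hp z).mul <|
    (differentiable_qpoch hp _).comp z ((differentiableAt_inv hz).const_mul p)

end Theta

section EllipticGamma

variable {p q z : ℂ}

lemma egamma_eq_doublePoch_div (hp : ‖p‖ < 1) (hq : ‖q‖ < 1) (z : ℂ) :
    egamma z p q = doublePoch p q (p * q * z⁻¹) / doublePoch p q z := by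
  have hsum := summable_norm_pow_mul_pow hp hq
  have hfactor : egamma z p q = ∏' jk : ℕ × ℕ,
      (1 - p * q * z⁻¹ * (p ^ jk.1 * q ^ jk.2)) / (1 - z * (p ^ jk.1 * q ^ jk.2)) :=
    tprod_congr fun jk ↦ by ring
  rw [hfactor]
  by_cases hpole : ∃ jk : ℕ × ℕ, 1 - z * (p ^ jk.1 * q ^ jk.2) = 0
  · obtain ⟨jk, hjk⟩ := hpole
    have hden : doublePoch p q z = 0 := tprod_of_exists_eq_zero ⟨jk, hjk⟩
    rw [hden, div_zero]
    exact tprod_of_exists_eq_zero ⟨jk, by rw [hjk, div_zero]⟩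
  · push Not at hpole
    exact (multipliable_one_sub_mul hsum _).tprod_div₀ (multipliable_one_sub_mul hsum z)
      (tprod_one_sub_mul_ne_zero hsum hpole)

lemma egamma_mul_left (hp : ‖p‖ < 1) (hq0 : q ≠ 0) (hq : ‖q‖ < 1) (hz : ‖z‖ < 1) :
    egamma (q * z) p q = theta p z * egamma z p q := by
  have harg : p * q * (q * z)⁻¹ = p * z⁻¹ := by field_simp
  have hqz : ‖q * z‖ < 1 := norm_mul_lt_one hq hz
  rw [egamma_eq_doublePoch_div hp hq, egamma_eq_doublePoch_div hp hq, harg,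
    doublePoch_eq_qpoch_mul_right hp hq (p * z⁻¹), doublePoch_eq_qpoch_mul_right hp hq z, theta,
    mul_left_comm q p, ← mul_assoc p q]
  have := doublePoch_ne_zero hp hq hqz
  have := qpoch_ne_zero hp hz
  field_simp

lemma egamma_ne_zero (hp : ‖p‖ < 1) (hq : ‖q‖ < 1) (hpq : ‖p * q‖ < ‖z‖) (hz : ‖z‖ < 1) :
    egamma z p q ≠ 0 := by
  rw [egamma_eq_doublePoch_div hp hq]
  exact div_ne_zero (doublePoch_ne_zero hp hq (norm_mul_inv_lt_one hpq))
    (doublePoch_ne_zero hp hq hz)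

lemma egamma_mul_egamma_eq_one (hp : ‖p‖ < 1) (hq : ‖q‖ < 1) {w : ℂ}
    (hpq : p * q ≠ 0) (hzw : z * w = p * q) (hz : ‖z‖ < 1) (hw : ‖w‖ < 1) :
    egamma z p q * egamma w p q = 1 := by
  obtain ⟨hz0, hw0⟩ := mul_ne_zero_iff.1 (hzw ▸ hpq)
  have := doublePoch_ne_zero hp hq hz
  have := doublePoch_ne_zero hp hq hw
  rw [egamma_eq_doublePoch_div hp hq, egamma_eq_doublePoch_div hp hq, ← hzw,
    mul_inv_cancel_right₀ hw0, mul_comm z w, mul_inv_cancel_right₀ hz0]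
  field_simp

lemma differentiableAt_egamma (hp : ‖p‖ < 1) (hq : ‖q‖ < 1) (hz0 : z ≠ 0) (hz : ‖z‖ < 1) :
    DifferentiableAt ℂ (fun z ↦ egamma z p q) z := by
  simp only [egamma_eq_doublePoch_div hp hq]
  exact ((differentiable_doublePoch hp hq _).comp z
    ((differentiableAt_inv hz0).const_mul (p * q))).div (differentiable_doublePoch hp hq z)
    (doublePoch_ne_zero hp hq hz)

lemma one_div_egamma_mul_egamma_inv (hp : ‖p‖ < 1) (hq : ‖q‖ < 1) (hz : ‖z‖ = 1) :
    1 / (egamma z p q * egamma z⁻¹ p q) = theta p z * theta q z⁻¹ := by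
  have hpq := norm_mul_lt_one hp hq
  have hnum : doublePoch p q (p * q * z) ≠ 0 :=
    doublePoch_ne_zero hp hq (by rwa [norm_mul, hz, mul_one])
  have hnum_inv : doublePoch p q (p * q * z⁻¹) ≠ 0 :=
    doublePoch_ne_zero hp hq (by rwa [norm_mul, norm_inv, hz, inv_one, mul_one])
  have hquot : doublePoch p q z / doublePoch p q (p * q * z) = qpoch z p * qpoch (q * z) q := by
    rw [doublePoch_eq_qpoch_mul_right hp hq z, doublePoch_eq_qpoch_mul_left hp hq (q * z),
      ← mul_assoc p q z, ← mul_assoc, mul_div_cancel_right₀ _ hnum]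
  have hquot_inv : doublePoch p q z⁻¹ / doublePoch p q (p * q * z⁻¹) =
      qpoch z⁻¹ q * qpoch (p * z⁻¹) p := by
    rw [doublePoch_eq_qpoch_mul_left hp hq z⁻¹, doublePoch_eq_qpoch_mul_right hp hq (p * z⁻¹),
      mul_left_comm q p, ← mul_assoc p q, ← mul_assoc, mul_div_cancel_right₀ _ hnum_inv]
  simp only [egamma_eq_doublePoch_div hp hq, theta, inv_inv]
  rw [one_div, mul_inv, inv_div, inv_div, div_mul_div_comm,
    mul_comm (doublePoch p q (p * q * z⁻¹)), ← div_mul_div_comm, hquot, hquot_inv]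
  ring

end EllipticGamma

section Annulus

/-- The open annulus `r < ‖z‖ < R` centred at the origin; for `r = 0` it is a punctured disc. -/
def annulus (r R : ℝ) : Set ℂ := norm ⁻¹' Set.Ioo r R

lemma isOpen_annulus (r R : ℝ) : IsOpen (annulus r R) :=
  isOpen_Ioo.preimage continuous_norm

lemma ne_zero_of_mem_annulus {r R : ℝ} (hr : 0 ≤ r) {z : ℂ} (hz : z ∈ annulus r R) : z ≠ 0 :=
  norm_pos_iff.1 (hr.trans_lt hz.1)

lemma isPreconnected_annulus {r R : ℝ} (hr : 0 ≤ r) : IsPreconnected (annulus r R) := by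
  have hconvex : Convex ℝ (re ⁻¹' (Real.exp ⁻¹' Set.Ioo r R)) :=
    (Set.ordConnected_Ioo.preimage_mono Real.exp_monotone).convex.is_linear_preimage
      reLm.isLinear
  have himage : annulus r R = Complex.exp '' (re ⁻¹' (Real.exp ⁻¹' Set.Ioo r R)) := by
    refine Set.Subset.antisymm (fun z hz ↦ ⟨Complex.log z, ?_, ?_⟩) ?_
    · rw [Set.mem_preimage, Set.mem_preimage, ← Complex.norm_exp,
        Complex.exp_log (ne_zero_of_mem_annulus hr hz)]
      exact hz
    · exact Complex.exp_log (ne_zero_of_mem_annulus hr hz)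
    · rintro _ ⟨w, hw, rfl⟩
      rwa [annulus, Set.mem_preimage, Complex.norm_exp]
  rw [himage]
  exact hconvex.isPreconnected.image _ Complex.continuous_exp.continuousOn

lemma exists_isLocalMax_norm_of_forall_mul_eq {g : ℂ → ℂ} {q : ℂ} (hq0 : q ≠ 0) (hq : ‖q‖ < 1)
    {k : ℝ} (hk : 0 ≤ k) (hkq : k < ‖q‖) (hg : ContinuousOn g (annulus k 1))
    (hper : ∀ x, k < ‖q * x‖ → ‖x‖ < 1 → g (q * x) = g x) :
    ∃ m ∈ annulus k 1, IsLocalMax (norm ∘ g) m := by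
  have hqpos : 0 < ‖q‖ := norm_pos_iff.2 hq0
  obtain ⟨ρ, hkρ, hρ⟩ := exists_between ((div_lt_one hqpos).2 hkq)
  have hρ0 : 0 < ρ := (div_nonneg hk hqpos.le).trans_lt hkρ
  have hkρq : k < ρ * ‖q‖ := (div_lt_iff₀ hqpos).1 hkρ
  let K : Set ℂ := norm ⁻¹' Set.Icc (ρ * ‖q‖) ρ
  have hKsub : K ⊆ annulus k 1 := fun z hz ↦ ⟨hkρq.trans_le hz.1, hz.2.trans_lt hρ⟩
  have hK : IsCompact K := (isCompact_closedBall (0 : ℂ) ρ).of_isClosed_subset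
    (isClosed_Icc.preimage continuous_norm) fun z hz ↦ mem_closedBall_zero_iff.2 hz.2
  have hρK : (ρ : ℂ) ∈ K := by
    simpa [K, abs_of_pos hρ0] using mul_le_of_le_one_right hρ0.le hq.le
  obtain ⟨m, hmK, hm⟩ : ∃ m ∈ norm ⁻¹' Set.Ioc (ρ * ‖q‖) ρ, ∀ z ∈ K, ‖g z‖ ≤ ‖g m‖ := by
    obtain ⟨m, hmK, hm⟩ := hK.exists_isMaxOn ⟨_, hρK⟩ (hg.mono hKsub).norm
    rcases hmK.1.eq_or_lt with hinner | hinner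
    · have hnorm : ‖m / q‖ = ρ := by rw [norm_div, ← hinner, mul_div_cancel_right₀ _ hqpos.ne']
      have hval : g (m / q) = g m := by
        rw [← hper (m / q) (by rw [mul_div_cancel₀ m hq0]; exact (hKsub hmK).1)
          (hnorm.trans_lt hρ), mul_div_cancel₀ m hq0]
      exact ⟨m / q, ⟨(mul_lt_of_lt_one_right hρ0 hq).trans_eq hnorm.symm, hnorm.le⟩,
        fun z hz ↦ hval ▸ hm hz⟩
    · exact ⟨m, ⟨hinner, hmK.2⟩, fun z hz ↦ hm hz⟩
  have hmk : m ∈ annulus k 1 := hKsub ⟨hmK.1.le, hmK.2⟩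
  have hqm : ‖q * m‖ < ρ := by
    rw [norm_mul]
    exact (mul_le_mul_of_nonneg_left hmK.2 hqpos.le).trans_lt (mul_lt_of_lt_one_left hρ0 hq)
  refine ⟨m, hmk, ?_⟩
  filter_upwards [(isOpen_annulus (ρ * ‖q‖) 1).mem_nhds ⟨hmK.1, hmk.2⟩,
    (continuous_const_mul q).norm.continuousAt.eventually_lt_const hqm] with z hz hqz
  rcases le_or_gt ‖z‖ ρ with hzρ | hzρ
  · exact hm z ⟨hz.1.le, hzρ⟩
  · have hqz' : ρ * ‖q‖ < ‖q * z‖ := by rw [norm_mul, mul_comm ρ]; gcongr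
    rw [Function.comp, ← hper z (hkρq.trans hqz') hz.2]
    exact hm _ ⟨hqz'.le, hqz.le⟩

lemma eq_of_forall_mul_eq_of_mem_annulus {g : ℂ → ℂ} {q : ℂ} (hq0 : q ≠ 0) (hq : ‖q‖ < 1)
    {k : ℝ} (hk : 0 ≤ k) (hkq : k < ‖q‖) (hg : DifferentiableOn ℂ g (annulus k 1))
    (hper : ∀ x, k < ‖q * x‖ → ‖x‖ < 1 → g (q * x) = g x) {x y : ℂ} (hx : x ∈ annulus k 1)
    (hy : y ∈ annulus k 1) : g x = g y := by
  obtain ⟨m, hmk, hlocal⟩ :=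
    exists_isLocalMax_norm_of_forall_mul_eq hq0 hq hk hkq hg.continuousOn hper
  have hdiff : ∀ᶠ w in 𝓝 m, DifferentiableAt ℂ g w :=
    hg.eventually_differentiableAt ((isOpen_annulus k 1).mem_nhds hmk)
  have hconst := (hg.analyticOnNhd (isOpen_annulus k 1)).eqOn_of_preconnected_of_eventuallyEq
    analyticOnNhd_const (isPreconnected_annulus hk) hmk
    (Complex.eventually_eq_of_isLocalMax_norm hdiff hlocal)
  rw [hconst hx, hconst hy]

end Annulus

section CircleAverage

lemma circleAverage_const_mul (a : ℂ) (f : ℂ → ℂ) (c : ℂ) (R : ℝ) :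
    circleAverage (fun z ↦ a * f z) c R = a * circleAverage f c R := by
  simpa only [smul_eq_mul] using circleAverage_fun_smul (a := a) (f := f)

lemma circleAverage_comp_mul (f : ℂ → ℂ) (a : ℂ) :
    circleAverage (fun z ↦ f (a * z)) 0 1 = circleAverage f 0 ‖a‖ := by
  rw [circleAverage_eq_integral_add (R := ‖a‖) (Complex.arg a), circleAverage]
  congr! 4 with θ
  simp only [circleMap, zero_add, ofReal_one, one_mul, ofReal_add, add_mul, Complex.exp_add]
  nth_rw 1 [← Complex.norm_mul_exp_arg_mul_I a]
  ring

lemma circleAverage_eq_of_differentiableAt {f : ℂ → ℂ} {r R : ℝ} (hr : 0 < r) (hrR : r ≤ R)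
    (hf : ∀ z, r ≤ ‖z‖ → ‖z‖ ≤ R → DifferentiableAt ℂ f z) :
    circleAverage f 0 R = circleAverage f 0 r := by
  have hdiff (z : ℂ) (hrz : r ≤ ‖z‖) (hzR : ‖z‖ ≤ R) :
      DifferentiableAt ℂ (fun z ↦ (z - 0)⁻¹ • f z) z := by
    simp only [sub_zero]
    exact (differentiableAt_inv (norm_pos_iff.1 (hr.trans_le hrz))).smul (hf z hrz hzR)
  rw [circleAverage_eq_circleIntegral (hr.trans_le hrR).ne', circleAverage_eq_circleIntegral hr.ne',
    Complex.circleIntegral_eq_of_differentiable_on_annulus_off_countable hr hrR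
      Set.countable_empty]
  · rintro z ⟨hzR, hrz⟩
    simp only [Metric.mem_closedBall, Metric.mem_ball, dist_zero_right, not_lt] at hzR hrz
    exact (hdiff z hrz hzR).continuousAt.continuousWithinAt
  · rintro z ⟨⟨hzR, hrz⟩, -⟩
    simp only [Metric.mem_closedBall, Metric.mem_ball, dist_zero_right, not_le] at hzR hrz
    exact hdiff z hrz.le hzR.le

lemma circleAverage_comp_mul_eq {f : ℂ → ℂ} {a : ℂ} (ha0 : a ≠ 0) (ha : ‖a‖ ≤ 1)
    (hf : ∀ z, ‖a‖ ≤ ‖z‖ → ‖z‖ ≤ 1 → DifferentiableAt ℂ f z) :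
    circleAverage (fun z ↦ f (a * z)) 0 1 = circleAverage f 0 1 := by
  rw [circleAverage_comp_mul, circleAverage_eq_of_differentiableAt (norm_pos_iff.2 ha0) ha hf]

lemma eq_zero_of_circleAverage_zpow_mul_eq_zero {f : ℂ → ℂ}
    (hf : ContinuousOn f (Metric.sphere 0 1))
    (h : ∀ n : ℤ, circleAverage (fun z ↦ z ^ n * f z) 0 1 = 0) {z : ℂ} (hz : ‖z‖ = 1) :
    f z = 0 := by
  have : Fact (0 < 2 * π) := ⟨Real.two_pi_pos⟩
  let F : C(AddCircle (2 * π), ℂ) := ⟨fun u ↦ f u.toCircle, hf.comp_continuous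
    (continuous_subtype_val.comp AddCircle.continuous_toCircle) fun u ↦ u.toCircle.2⟩
  have hcoe (u : ℝ) : (AddCircle.toCircle (u : AddCircle (2 * π)) : ℂ) = circleMap 0 1 u := by
    rw [AddCircle.toCircle_apply_mk, div_self Real.two_pi_pos.ne', one_mul, Circle.coe_exp]
    simp [circleMap]
  have hcoeff : fourierCoeff F = 0 := by
    funext n
    rw [fourierCoeff_eq_intervalIntegral F n 0, zero_add, Pi.zero_apply, ← h (-n), circleAverage,
      one_div]
    congr! 3 with u
    simp [F, fourier_apply, AddCircle.toCircle_zsmul, AddCircle.toCircle_neg, hcoe]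
  have hzero := has_pointwise_sum_fourier_series_of_summable (f := F)
    (by rw [hcoeff]; exact summable_zero) (Complex.arg z : ℝ)
  simp only [hcoeff, Pi.zero_apply, zero_smul] at hzero
  have harg : circleMap 0 1 (Complex.arg z) = z := by
    simpa [circleMap, hz] using Complex.norm_mul_exp_arg_mul_I z
  simpa [F, hcoe, harg] using hzero.unique hasSum_zero

lemma continuous_deriv_of_continuousOn_prod {X : Type*} [TopologicalSpace X] {F : X → ℂ → ℂ}
    {U : Set ℂ} (hU : IsOpen U) (hF : ContinuousOn (Function.uncurry F) (Set.univ ×ˢ U))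
    (hd : ∀ u, DifferentiableOn ℂ (F u) U) {z : ℂ} (hz : z ∈ U) :
    Continuous fun u ↦ deriv (F u) z := by
  refine continuous_iff_continuousAt.2 fun u ↦ ?_
  have hlim : TendstoLocallyUniformlyOn F (F u) (𝓝 u) U := by
    refine (tendstoLocallyUniformlyOn_iff_forall_isCompact hU).2 fun K hKU hK V hV ↦ ?_
    obtain ⟨v, hv, hvV⟩ := hK.mem_uniformity_of_prod (hF.mono (Set.prod_mono subset_rfl hKU))
      (Set.mem_univ u) (symm_le_uniformity hV)
    rw [nhdsWithin_univ] at hv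
    filter_upwards [hv] with u' hu' w hw using hvV u' hu' w hw
  exact (hlim.deriv (.of_forall hd) hU).tendsto_at hz

lemma differentiableOn_circleAverage {F : ℂ → ℂ → ℂ} {U : Set ℂ} (hU : IsOpen U)
    (hF : ContinuousOn (Function.uncurry F) (U ×ˢ Metric.sphere 0 1))
    (hd : ∀ z ∈ Metric.sphere (0 : ℂ) 1, DifferentiableOn ℂ (fun x ↦ F x z) U) :
    DifferentiableOn ℂ (fun x ↦ circleAverage (F x) 0 1) U := by
  intro x₀ hx₀
  obtain ⟨δ, hδ, hball⟩ := Metric.nhds_basis_closedBall.mem_iff.1 (hU.mem_nhds hx₀)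
  obtain ⟨M, hM⟩ := ((isCompact_closedBall x₀ δ).prod
    (isCompact_sphere (0 : ℂ) 1)).exists_bound_of_continuousOn (hF.mono
      (Set.prod_mono hball subset_rfl))
  have hmem (θ : ℝ) : circleMap 0 1 θ ∈ Metric.sphere (0 : ℂ) 1 :=
    circleMap_mem_sphere 0 zero_le_one θ
  have hcont {x : ℂ} (hx : x ∈ U) : Continuous fun θ ↦ F x (circleMap 0 1 θ) :=
    hF.comp_continuous (f := fun θ : ℝ ↦ (x, circleMap 0 1 θ)) (by fun_prop)
      fun θ ↦ ⟨hx, hmem θ⟩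
  have hderiv (θ : ℝ) {x : ℂ} (hx : x ∈ U) : HasDerivAt (fun x ↦ F x (circleMap 0 1 θ))
      (deriv (fun x ↦ F x (circleMap 0 1 θ)) x) x :=
    ((hd _ (hmem θ)).differentiableAt (hU.mem_nhds hx)).hasDerivAt
  have hderiv_cont : Continuous fun θ ↦ deriv (fun x ↦ F x (circleMap 0 1 θ)) x₀ :=
    continuous_deriv_of_continuousOn_prod (F := fun (θ : ℝ) x ↦ F x (circleMap 0 1 θ)) hU
      (hF.comp (f := fun y : ℝ × ℂ ↦ (y.2, circleMap 0 1 y.1)) (by fun_prop)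
        fun y hy ↦ ⟨hy.2, hmem y.1⟩) (fun θ ↦ hd _ (hmem θ)) hx₀
  have hsub {x : ℂ} (hx : x ∈ Metric.ball x₀ (δ / 2)) :
      Metric.closedBall x (δ / 2) ⊆ Metric.closedBall x₀ δ :=
    Metric.closedBall_subset_closedBall' (by linarith [Metric.mem_ball.1 hx])
  have hcauchy (θ : ℝ) {x : ℂ} (hx : x ∈ Metric.ball x₀ (δ / 2)) :
      ‖deriv (fun x ↦ F x (circleMap 0 1 θ)) x‖ ≤ M / (δ / 2) :=
    Complex.norm_deriv_le_of_forall_mem_sphere_norm_le (half_pos hδ)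
      (((hd _ (hmem θ)).mono ((hsub hx).trans hball)).diffContOnCl_ball subset_rfl)
      fun w hw ↦ hM (w, _) ⟨hsub hx (Metric.sphere_subset_closedBall hw), hmem θ⟩
  have hball_mem {x : ℂ} (hx : x ∈ Metric.ball x₀ (δ / 2)) : x ∈ U :=
    hball (hsub hx (Metric.mem_closedBall_self (half_pos hδ).le))
  have hint := (intervalIntegral.hasDerivAt_integral_of_dominated_loc_of_deriv_le
    (μ := MeasureTheory.volume) (a := 0) (b := 2 * π) (F := fun x θ ↦ F x (circleMap 0 1 θ))
    (Metric.ball_mem_nhds x₀ (half_pos hδ))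
    (by filter_upwards [hU.mem_nhds hx₀] with x hx using (hcont hx).aestronglyMeasurable)
    ((hcont hx₀).intervalIntegrable _ _) hderiv_cont.aestronglyMeasurable
    (.of_forall fun θ _ x hx ↦ hcauchy θ hx) intervalIntegrable_const
    (.of_forall fun θ _ x hx ↦ hderiv θ (hball_mem hx))).2
  exact (hint.differentiableAt.const_smul ((2 * π)⁻¹ : ℝ)).differentiableWithinAt

end CircleAverage

section ThetaFunctions

/-- A theta function of degree `n` and multiplier `e` for the nome `p`: a function holomorphic
on `ℂ ∖ {0}` with `F (p z) = F z / (e z ^ n)`. -/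
structure IsThetaFunction (p e : ℂ) (n : ℕ) (F : ℂ → ℂ) : Prop where
  differentiableAt {z : ℂ} : z ≠ 0 → DifferentiableAt ℂ F z
  mul_map_mul {z : ℂ} : z ≠ 0 → e * z ^ n * F (p * z) = F z

/-- The coefficient of `z ^ m` in the Laurent expansion of a function holomorphic
on `ℂ ∖ {0}`. -/
noncomputable def laurentCoeff (F : ℂ → ℂ) (m : ℤ) : ℂ :=
  circleAverage (fun z ↦ z ^ (-m) * F z) 0 1

lemma eq_zero_of_forall_laurentCoeff_eq_zero {F : ℂ → ℂ}
    (hF : ∀ z, z ≠ 0 → DifferentiableAt ℂ F z) (hc : ∀ m, laurentCoeff F m = 0) {z : ℂ}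
    (hz : z ≠ 0) : F z = 0 := by
  have hdiff (n : ℤ) (w : ℂ) (hw : w ≠ 0) : DifferentiableAt ℂ (fun w ↦ w ^ n * F w) w :=
    (differentiableAt_zpow.2 (.inl hw)).mul (hF w hw)
  have hradius (n : ℤ) : circleAverage (fun w ↦ w ^ n * F w) 0 ‖z‖ = 0 := by
    have hcoeff : circleAverage (fun w ↦ w ^ n * F w) 0 1 = 0 := by
      simpa only [laurentCoeff, neg_neg] using hc (-n)
    refine Eq.trans ?_ hcoeff
    rcases le_total ‖z‖ 1 with h | h
    · exact (circleAverage_eq_of_differentiableAt (norm_pos_iff.2 hz) h fun w hw _ ↦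
        hdiff _ w (norm_pos_iff.1 ((norm_pos_iff.2 hz).trans_le hw))).symm
    · exact circleAverage_eq_of_differentiableAt zero_lt_one h fun w hw _ ↦
        hdiff _ w (norm_pos_iff.1 (zero_lt_one.trans_le hw))
  have hcont : ContinuousOn (fun w ↦ F (z * w)) (Metric.sphere 0 1) := fun w hw ↦
    ((hF _ (mul_ne_zero hz (ne_zero_of_mem_unit_sphere ⟨w, hw⟩))).continuousAt.comp
      (continuous_const_mul z).continuousAt).continuousWithinAt
  have hfourier (n : ℤ) : circleAverage (fun w ↦ w ^ n * F (z * w)) 0 1 = 0 := by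
    have hscale : (fun w ↦ w ^ n * F (z * w)) = fun w ↦ z ^ (-n) * ((z * w) ^ n * F (z * w)) := by
      funext w
      rw [mul_zpow, ← mul_assoc, ← mul_assoc, ← zpow_add₀ hz, neg_add_cancel, zpow_zero,
        one_mul]
    rw [hscale, circleAverage_const_mul, circleAverage_comp_mul (fun w ↦ w ^ n * F w), hradius,
      mul_zero]
  simpa using eq_zero_of_circleAverage_zpow_mul_eq_zero hcont hfourier (norm_one (α := ℂ))

lemma laurentCoeff_sum {ι : Type*} [Fintype ι] {F : ι → ℂ → ℂ}
    (hF : ∀ i, ContinuousOn (F i) (Metric.sphere 0 1)) (a : ι → ℂ) (m : ℤ) :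
    laurentCoeff (fun z ↦ ∑ i, a i * F i z) m = ∑ i, a i * laurentCoeff (F i) m := by
  have hzpow : ContinuousOn (fun z : ℂ ↦ z ^ (-m)) (Metric.sphere 0 1) := fun z hz ↦
    (continuousAt_zpow₀ z _ (.inl (ne_zero_of_mem_unit_sphere ⟨z, hz⟩))).continuousWithinAt
  simp only [laurentCoeff, Finset.mul_sum, mul_left_comm _ (a _)]
  rw [circleAverage_fun_sum (f := fun i z ↦ a i * (z ^ (-m) * F i z)) fun i _ ↦
    (continuousOn_const.mul (hzpow.mul (hF i))).circleIntegrable zero_le_one]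
  simp only [circleAverage_const_mul]

namespace IsThetaFunction

variable {p e : ℂ} {n : ℕ} {F : ℂ → ℂ}

lemma laurentCoeff_eq (hF : IsThetaFunction p e n F) (hp0 : p ≠ 0) (hp : ‖p‖ < 1) (m : ℤ) :
    laurentCoeff F m = e * p ^ (m - n) * laurentCoeff F (m - n) := by
  have hne {z : ℂ} (hz : ‖p‖ ≤ ‖z‖) : z ≠ 0 := norm_pos_iff.1 ((norm_pos_iff.2 hp0).trans_le hz)
  rw [laurentCoeff, laurentCoeff,
    ← circleAverage_comp_mul_eq (f := fun z ↦ z ^ (-(m - n)) * F z) hp0 hp.le fun z hz _ ↦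
      (differentiableAt_zpow.2 (.inl (hne hz))).mul (hF.differentiableAt (hne hz)),
    ← circleAverage_const_mul]
  refine circleAverage_congr_sphere fun z hz ↦ ?_
  have hz0 : z ≠ 0 := ne_zero_of_mem_unit_sphere ⟨z, by simpa using hz⟩
  have hpow : p ^ (m - n) * (p * z) ^ (-(m - n)) = z ^ (-m) * z ^ n := by
    rw [mul_zpow, ← mul_assoc, ← zpow_add₀ hp0, add_neg_cancel, zpow_zero, one_mul, neg_sub,
      sub_eq_neg_add, zpow_add₀ hz0, zpow_natCast]
  rw [← hF.mul_map_mul hz0]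
  linear_combination -(e * F (p * z)) * hpow

lemma eq_zero_of_laurentCoeff_eq_zero (hF : IsThetaFunction p e n F) (hp0 : p ≠ 0)
    (hp : ‖p‖ < 1) (he : e ≠ 0) (hn : 0 < n) (hc : ∀ m : Fin n, laurentCoeff F m = 0) {z : ℂ}
    (hz : z ≠ 0) : F z = 0 := by
  have hperiodic : Function.Periodic (fun m : ℤ ↦ laurentCoeff F m = 0) n := fun m ↦ by
    simp [hF.laurentCoeff_eq hp0 hp (m + n), he, zpow_ne_zero _ hp0]
  have hn' : (0 : ℤ) < n := by exact_mod_cast hn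
  refine eq_zero_of_forall_laurentCoeff_eq_zero (fun _ ↦ hF.differentiableAt) (fun m ↦ ?_) hz
  have hmod := hperiodic.int_mul (m / n) (m % n)
  rw [Int.cast_id, Int.emod_add_ediv_mul] at hmod
  refine hmod.mpr ?_
  lift m % n to ℕ using m.emod_nonneg hn'.ne' with k hk
  exact hc ⟨k, by exact_mod_cast hk ▸ m.emod_lt_of_pos hn'⟩

lemma sum {ι : Type*} [Fintype ι] {F : ι → ℂ → ℂ} (hF : ∀ i, IsThetaFunction p e n (F i))
    (a : ι → ℂ) : IsThetaFunction p e n fun z ↦ ∑ i, a i * F i z where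
  differentiableAt hz := .fun_sum fun i _ ↦ ((hF i).differentiableAt hz).const_mul (a i)
  mul_map_mul hz := by
    simp only [Finset.mul_sum, mul_left_comm _ (a _), (hF _).mul_map_mul hz]

lemma exists_sum_mul_eq_zero {ι : Type*} [Fintype ι] {F : ι → ℂ → ℂ} (hp0 : p ≠ 0)
    (hp : ‖p‖ < 1) (he : e ≠ 0) (hn : 0 < n) (hι : n < Fintype.card ι)
    (hF : ∀ i, IsThetaFunction p e n (F i)) :
    ∃ a : ι → ℂ, a ≠ 0 ∧ ∀ z, z ≠ 0 → ∑ i, a i * F i z = 0 := by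
  let coeffs : (ι → ℂ) →ₗ[ℂ] Fin n → ℂ :=
    Fintype.linearCombination ℂ fun i (m : Fin n) ↦ laurentCoeff (F i) m
  obtain ⟨a, ha, ha0⟩ := Submodule.exists_mem_ne_zero_of_ne_bot
    (LinearMap.ker_ne_bot_of_finrank_lt (f := coeffs) (by simpa using hι))
  refine ⟨a, ha0, fun z hz ↦ (sum hF a).eq_zero_of_laurentCoeff_eq_zero hp0 hp he hn
    (fun m ↦ ?_) hz⟩
  rw [laurentCoeff_sum fun i w hw ↦ ((hF i).differentiableAt
    (ne_zero_of_mem_unit_sphere ⟨w, hw⟩)).continuousAt.continuousWithinAt]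
  simpa [coeffs, Fintype.linearCombination_apply] using congrFun (LinearMap.mem_ker.1 ha) m

end IsThetaFunction

end ThetaFunctions

section ThetaIdentities

/-- The function `b ↦ b * thetaBracket p e a b` is the theta function of degree `2` and
multiplier `e` that vanishes at `b = a`; the factor `b⁻¹` makes the bracket antisymmetric. -/
noncomputable def thetaBracket (p e a b : ℂ) : ℂ :=
  theta p (b / a) * theta p (e * a * b) / b

variable {p : ℂ}

lemma isThetaFunction_mul_thetaBracket (hp0 : p ≠ 0) (hp : ‖p‖ < 1) {e a : ℂ} (he : e ≠ 0)
    (ha : a ≠ 0) : IsThetaFunction p e 2 fun z ↦ theta p (z / a) * theta p (e * a * z) where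
  differentiableAt {z} hz :=
    ((differentiableAt_theta hp (div_ne_zero hz ha)).comp z (differentiableAt_id.div_const a)).mul
      ((differentiableAt_theta hp (mul_ne_zero (mul_ne_zero he ha) hz)).comp z
        (differentiableAt_id.const_mul (e * a)))
  mul_map_mul {z} hz := by
    rw [mul_div_assoc, mul_left_comm _ p, theta_self_mul hp0 hp (div_ne_zero hz ha),
      theta_self_mul hp0 hp (mul_ne_zero (mul_ne_zero he ha) hz)]
    field_simp

lemma thetaBracket_swap (hp : ‖p‖ < 1) (e : ℂ) {a b : ℂ} (ha : a ≠ 0) (hb : b ≠ 0) :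
    thetaBracket p e b a = -thetaBracket p e a b := by
  rw [thetaBracket, thetaBracket, ← inv_div b a, theta_inv hp (div_ne_zero hb ha),
    mul_right_comm e b a]
  field_simp

lemma thetaBracket_self (hp : ‖p‖ < 1) (e : ℂ) {a : ℂ} (ha : a ≠ 0) :
    thetaBracket p e a a = 0 := by
  simp [thetaBracket, ha, theta_one hp]

-- The three functions `thetaBracket p e y`, `thetaBracket p e v`, `thetaBracket p e u` lie in a
-- space of dimension two, and this is the Plücker relation expressing their dependence.
lemma thetaBracket_three_term (hp0 : p ≠ 0) (hp : ‖p‖ < 1) {e x y u v : ℂ} (he : e ≠ 0)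
    (hx : x ≠ 0) (hy : y ≠ 0) (hu : u ≠ 0) (hv : v ≠ 0) :
    thetaBracket p e y x * thetaBracket p e v u - thetaBracket p e v x * thetaBracket p e y u +
      thetaBracket p e u x * thetaBracket p e y v = 0 := by
  have hroots (i : Fin 3) : ![y, v, u] i ≠ 0 := by fin_cases i <;> assumption
  obtain ⟨c, hc, hrel⟩ := IsThetaFunction.exists_sum_mul_eq_zero hp0 hp he two_pos
    (by simp) fun i : Fin 3 ↦ isThetaFunction_mul_thetaBracket hp0 hp he (hroots i)
  have hbracket (z : ℂ) (hz : z ≠ 0) : c 0 * thetaBracket p e y z + c 1 * thetaBracket p e v z +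
      c 2 * thetaBracket p e u z = 0 := by
    have := hrel z hz
    simp only [Fin.sum_univ_three, Matrix.cons_val] at this
    simp only [thetaBracket, mul_div_assoc', ← add_div, this, zero_div]
  have hX := hbracket x hx
  have hY := hbracket y hy
  have hU := hbracket u hu
  have hV := hbracket v hv
  simp only [thetaBracket_self hp e hy, thetaBracket_self hp e hu, thetaBracket_self hp e hv,
    thetaBracket_swap hp e hy hv, thetaBracket_swap hp e hy hu, thetaBracket_swap hp e hv hu]
    at hY hU hV
  obtain ⟨i, hi⟩ := Function.ne_iff.1 hc
  refine mul_left_cancel₀ hi ?_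
  rw [mul_zero]
  fin_cases i <;> dsimp
  · linear_combination thetaBracket p e v u * hX - thetaBracket p e v x * hU +
      thetaBracket p e u x * hV
  · linear_combination thetaBracket p e y x * hU - thetaBracket p e y u * hX -
      thetaBracket p e u x * hY
  · linear_combination thetaBracket p e v x * hY - thetaBracket p e y x * hV +
      thetaBracket p e y v * hX

lemma theta_sq_mul_eq (hp0 : p ≠ 0) (hp : ‖p‖ < 1) {b d x z : ℂ} (hb : b ≠ 0) (hd : d ≠ 0)
    (hx : x ≠ 0) (hz : z ≠ 0) :
    theta p (b * d) * theta p (z ^ 2) * theta p (x * b) * theta p (x * d) =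
      theta p (b * z) * theta p (d * z) * theta p (x * z) * theta p (b * d * x / z) -
        z ^ 2 *
          (theta p (b / z) * theta p (d / z) * theta p (x / z) * theta p (b * d * x * z)) := by
  rw [mul_rotate b d x, mul_rotate d x b]
  have hrel := thetaBracket_three_term hp0 hp (mul_ne_zero hb hd) hx (inv_ne_zero hb) hz
    (inv_ne_zero hz)
  simp only [thetaBracket] at hrel
  rw [show x / b⁻¹ = x * b by field_simp, show b * d * b⁻¹ * x = x * d by field_simp,
    show z / z⁻¹ = z ^ 2 by field_simp, show b * d * z⁻¹ * z = b * d by field_simp,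
    show x / z⁻¹ = x * z by field_simp, show b * d * z⁻¹ * x = x * b * d / z by field_simp,
    show z / b⁻¹ = b * z by field_simp, show b * d * b⁻¹ * z = d * z by field_simp,
    show z⁻¹ / b⁻¹ = b / z by field_simp, show b * d * b⁻¹ * z⁻¹ = d / z by field_simp,
    show b * d * z * x = x * b * d * z by ring] at hrel
  field_simp at hrel
  linear_combination hrel

lemma theta_mul_sub_theta_mul_eq (hp0 : p ≠ 0) (hp : ‖p‖ < 1) {a s b d e z : ℂ}
    (hz : z ≠ 0) (hbal : a * s * b * d * e = p) :
    theta p (a / z) * theta p (s * b) * theta p (s * d) * theta p (e * s / z) -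
        theta p (s / z) * theta p (a * b) * theta p (a * d) * theta p (e * a / z) =
      -(a / z) * theta p (s / a) * theta p e * theta p (b * z) * theta p (d * z) := by
  obtain ⟨⟨⟨⟨ha, hs⟩, hb⟩, hd⟩, he⟩ : (((a ≠ 0 ∧ s ≠ 0) ∧ b ≠ 0) ∧ d ≠ 0) ∧ e ≠ 0 := by
    simpa only [← hbal, mul_ne_zero_iff] using hp0
  have hrel := thetaBracket_three_term hp0 hp (mul_ne_zero hb hd) hs (inv_ne_zero hb) ha hz
  simp only [thetaBracket] at hrel
  rw [show s / b⁻¹ = s * b by field_simp, show b * d * b⁻¹ * s = s * d by field_simp,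
    show b * d * z * a = p / (e * s / z) by rw [← hbal]; field_simp,
    show b * d * z * s = p / (e * a / z) by rw [← hbal]; field_simp,
    show a / b⁻¹ = a * b by field_simp, show b * d * b⁻¹ * a = a * d by field_simp,
    show b * d * a * s = p / e by rw [← hbal]; field_simp,
    show z / b⁻¹ = b * z by field_simp, show b * d * b⁻¹ * z = d * z by field_simp,
    theta_div_self hp0, theta_div_self hp0, theta_div_self hp0] at hrel
  field_simp at hrel ⊢
  linear_combination hrel

lemma theta_four_term (hp0 : p ≠ 0) (hp : ‖p‖ < 1) {a s z : ℂ} {b : Multiset ℂ}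
    (hb : b.card = 4) (hz : z ≠ 0) (hbal : a * (s * b.prod) = p)
    (hne : ∀ x y : ℂ, {x, y} ≤ b → theta p (x * y) ≠ 0) :
    theta p (z ^ 2) *
        (theta p (a * z) * theta p (a / z) * (b.map fun x ↦ theta p (s * x)).prod -
          theta p (s * z) * theta p (s / z) * (b.map fun x ↦ theta p (a * x)).prod) =
      -a * theta p (s / a) *
        (z⁻¹ * (theta p (a * z) * (theta p (s * z) * (b.map fun x ↦ theta p (x * z)).prod)) -
          z ^ 3 *
            (theta p (a / z) * (theta p (s / z) * (b.map fun x ↦ theta p (x / z)).prod))) := by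
  obtain ⟨b₀, b₁, b₂, b₃, rfl⟩ := Multiset.card_eq_four.1 hb
  replace hne : theta p (b₂ * b₃) ≠ 0 :=
    hne b₂ b₃ ((Multiset.le_cons_self _ b₁).trans (Multiset.le_cons_self _ b₀))
  simp only [Multiset.insert_eq_cons, Multiset.map_cons, Multiset.map_singleton,
    Multiset.prod_cons, Multiset.prod_singleton] at hbal ⊢
  obtain ⟨ha, hs, _, _, hb₂, hb₃⟩ :
      a ≠ 0 ∧ s ≠ 0 ∧ b₀ ≠ 0 ∧ b₁ ≠ 0 ∧ b₂ ≠ 0 ∧ b₃ ≠ 0 := by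
    simpa only [← hbal, mul_ne_zero_iff] using hp0
  have hbal' : a * s * b₀ * b₁ * (b₂ * b₃) = p := by rw [← hbal]; ring
  have hWs := theta_sq_mul_eq hp0 hp hb₂ hb₃ hs hz
  have hWa := theta_sq_mul_eq hp0 hp hb₂ hb₃ ha hz
  have hB := theta_mul_sub_theta_mul_eq hp0 hp hz hbal'
  have hB' := theta_mul_sub_theta_mul_eq hp0 hp (inv_ne_zero hz) hbal'
  simp only [div_inv_eq_mul] at hB'
  simp only [div_eq_mul_inv] at *
  refine mul_left_cancel₀ hne ?_
  linear_combination
    (theta p (a * z) * theta p (a * z⁻¹) * theta p (s * b₀) * theta p (s * b₁)) * hWs -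
    (theta p (s * z) * theta p (s * z⁻¹) * theta p (a * b₀) * theta p (a * b₁)) * hWa +
    (theta p (b₂ * z) * theta p (b₃ * z) * theta p (a * z) * theta p (s * z)) * hB -
    z ^ 2 * (theta p (b₂ * z⁻¹) * theta p (b₃ * z⁻¹) * theta p (a * z⁻¹) * theta p (s * z⁻¹)) * hB'

end ThetaIdentities

section MultisetProducts

lemma differentiableAt_multiset_prod_map {ι : Type*} {t : Multiset ι} {f : ι → ℂ → ℂ} {z : ℂ}
    (hf : ∀ x ∈ t, DifferentiableAt ℂ (f x) z) :
    DifferentiableAt ℂ (fun z ↦ (t.map fun x ↦ f x z).prod) z := by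
  classical
  exact (HasFDerivAt.multiset_prod fun x hx ↦ (hf x hx).hasFDerivAt).differentiableAt

lemma norm_prod_le_one {t : Multiset ℂ} (ht : ∀ x ∈ t, ‖x‖ ≤ 1) : ‖t.prod‖ ≤ 1 := by
  induction t using Multiset.induction with
  | empty => simp
  | cons a t ih =>
    rw [Multiset.forall_mem_cons] at ht
    rw [Multiset.prod_cons, norm_mul]
    exact mul_le_one₀ ht.1 (norm_nonneg _) (ih ht.2)

lemma prod_mem_annulus {t : Multiset ℂ} (ht0 : t ≠ 0) (ht : ∀ x ∈ t, x ∈ annulus 0 1) :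
    t.prod ∈ annulus 0 1 := by
  obtain ⟨a, ha⟩ := Multiset.exists_mem_of_ne_zero ht0
  obtain ⟨t, rfl⟩ := Multiset.exists_cons_of_mem ha
  refine ⟨norm_pos_iff.2 (Multiset.prod_ne_zero fun h ↦ ?_), ?_⟩
  · exact ne_zero_of_mem_annulus le_rfl (ht 0 h) rfl
  · rw [Multiset.forall_mem_cons] at ht
    rw [Multiset.prod_cons]
    exact norm_mul_lt_one_of_le_one ht.1.2 (norm_prod_le_one fun x hx ↦ (ht.2 x hx).2.le)

lemma norm_prod_lt_norm_prod {s t : Multiset ℂ} (hst : s < t) (ht : ∀ x ∈ t, x ∈ annulus 0 1) :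
    ‖t.prod‖ < ‖s.prod‖ := by
  obtain ⟨u, rfl⟩ := Multiset.le_iff_exists_add.1 hst.le
  have hu : u ≠ 0 := by rintro rfl; simp at hst
  have hs : s.prod ≠ 0 := Multiset.prod_ne_zero fun h ↦
    ne_zero_of_mem_annulus le_rfl (ht 0 (Multiset.mem_add.2 (.inl h))) rfl
  rw [Multiset.prod_add, norm_mul]
  exact mul_lt_of_lt_one_right (norm_pos_iff.2 hs)
    (prod_mem_annulus hu fun x hx ↦ ht x (Multiset.mem_add.2 (.inr hx))).2

end MultisetProducts

lemma mul_mem_annulus {q z : ℂ} (hq0 : q ≠ 0) (hq : ‖q‖ < 1) (hz : z ∈ annulus 0 1) :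
    q * z ∈ annulus 0 1 :=
  ⟨norm_pos_iff.2 (mul_ne_zero hq0 (ne_zero_of_mem_annulus le_rfl hz)), norm_mul_lt_one hq hz.2⟩

section PairProduct

/-- The right-hand side `∏_{j<k} Γ(t_j t_k; p, q)` of the elliptic beta integral, for a multiset
of parameters. -/
noncomputable def pairProduct (p q : ℂ) (t : Multiset ℂ) : ℂ :=
  ((t.powersetCard 2).map fun s ↦ egamma s.prod p q).prod

variable {p q : ℂ}

lemma pairProduct_zero : pairProduct p q 0 = 1 := by
  rw [pairProduct, Multiset.powersetCard_eq_empty 2 (by simp), Multiset.map_zero,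
    Multiset.prod_zero]

lemma pairProduct_cons (a : ℂ) (t : Multiset ℂ) :
    pairProduct p q (a ::ₘ t) = (t.map fun x ↦ egamma (a * x) p q).prod * pairProduct p q t := by
  simp only [pairProduct, Multiset.powersetCard_cons, Multiset.powersetCard_one, Multiset.map_map,
    Multiset.map_add, Multiset.prod_add, Function.comp_def, Multiset.prod_cons,
    Multiset.prod_singleton]
  rw [mul_comm]

lemma pairProduct_mul_cons (hp : ‖p‖ < 1) (hq0 : q ≠ 0) (hq : ‖q‖ < 1) {a : ℂ} (ha : ‖a‖ < 1)
    {t : Multiset ℂ} (ht : ∀ x ∈ t, ‖x‖ < 1) :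
    pairProduct p q ((q * a) ::ₘ t) =
      (t.map fun x ↦ theta p (a * x)).prod * pairProduct p q (a ::ₘ t) := by
  rw [pairProduct_cons, pairProduct_cons, ← mul_assoc, ← Multiset.prod_map_mul]
  congr 2
  refine Multiset.map_congr rfl fun x hx ↦ ?_
  rw [mul_assoc, egamma_mul_left hp hq0 hq (norm_mul_lt_one ha (ht x hx))]

lemma pairProduct_ne_zero (hp : ‖p‖ < 1) (hq : ‖q‖ < 1) {t : Multiset ℂ}
    (ht : ∀ x ∈ t, x ∈ annulus 0 1) (hcard : 2 < t.card) (hprod : t.prod = p * q) :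
    pairProduct p q t ≠ 0 := by
  refine Multiset.prod_ne_zero fun h ↦ ?_
  obtain ⟨s, hs, hs0⟩ := Multiset.mem_map.1 h
  obtain ⟨hst, hs2⟩ := Multiset.mem_powersetCard.1 hs
  refine egamma_ne_zero hp hq ?_ (prod_mem_annulus ?_ fun x hx ↦ ht x (Multiset.mem_of_le hst hx)).2
    hs0
  · rw [← hprod]
    exact norm_prod_lt_norm_prod (hst.lt_of_ne (by rintro rfl; omega)) ht
  · rintro rfl
    simp at hs2

end PairProduct

section BetaIntegral

/-- The product `Γ(xz; p, q) Γ(x z⁻¹; p, q)`, written `Γ(x z^±; p, q)` in the literature. -/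
noncomputable def egammaPair (p q x z : ℂ) : ℂ :=
  egamma (x * z) p q * egamma (x / z) p q

/-- The weight `1 / (Γ(z²; p, q) Γ(z⁻²; p, q))` of the elliptic beta integral, in the form
which is holomorphic on `ℂ ∖ {0}`. -/
noncomputable def betaWeight (p q z : ℂ) : ℂ :=
  theta p (z ^ 2) * theta q (z ^ 2)⁻¹

/-- The integrand of the elliptic beta integral with a multiset `t` of parameters. -/
noncomputable def ellipticBetaIntegrand (p q : ℂ) (t : Multiset ℂ) (z : ℂ) : ℂ :=
  (t.map fun x ↦ egammaPair p q x z).prod * betaWeight p q z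

/-- The elliptic beta integral, normalised as an average over the unit circle. -/
noncomputable def ellipticBetaIntegral (p q : ℂ) (t : Multiset ℂ) : ℂ :=
  circleAverage (ellipticBetaIntegrand p q t) 0 1

variable {p q : ℂ}

lemma egammaPair_mul_left (hp : ‖p‖ < 1) (hq0 : q ≠ 0) (hq : ‖q‖ < 1) {x z : ℂ} (hx : ‖x‖ < 1)
    (hz : ‖z‖ = 1) :
    egammaPair p q (q * x) z = theta p (x * z) * theta p (x / z) * egammaPair p q x z := by
  rw [egammaPair, egammaPair, mul_assoc, mul_div_assoc,
    egamma_mul_left hp hq0 hq (by simpa [hz] using hx),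
    egamma_mul_left hp hq0 hq (by simpa [hz] using hx)]
  ring

lemma ellipticBetaIntegrand_mul_cons (hp : ‖p‖ < 1) (hq0 : q ≠ 0) (hq : ‖q‖ < 1) {a z : ℂ}
    (ha : ‖a‖ < 1) (hz : ‖z‖ = 1) (t : Multiset ℂ) :
    ellipticBetaIntegrand p q ((q * a) ::ₘ t) z =
      theta p (a * z) * theta p (a / z) * ellipticBetaIntegrand p q (a ::ₘ t) z := by
  simp only [ellipticBetaIntegrand, Multiset.map_cons, Multiset.prod_cons,
    egammaPair_mul_left hp hq0 hq ha hz, mul_assoc]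

lemma continuousOn_egammaPair (hp : ‖p‖ < 1) (hq : ‖q‖ < 1) :
    ContinuousOn (Function.uncurry (egammaPair p q)) (annulus 0 1 ×ˢ Metric.sphere 0 1) := by
  rintro ⟨x, z⟩ ⟨hx, hz⟩
  have hx0 := ne_zero_of_mem_annulus le_rfl hx
  have hz0 : z ≠ 0 := ne_zero_of_mem_unit_sphere ⟨z, hz⟩
  have hz1 : ‖z‖ = 1 := mem_sphere_zero_iff_norm.1 hz
  refine ContinuousAt.continuousWithinAt (.mul ?_ ?_)
  · exact (differentiableAt_egamma hp hq (mul_ne_zero hx0 hz0)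
      (by simpa [hz1] using hx.2)).continuousAt.comp (x := (x, z)) (f := fun y : ℂ × ℂ ↦ y.1 * y.2)
      (by fun_prop)
  · exact (differentiableAt_egamma hp hq (div_ne_zero hx0 hz0)
      (by simpa [hz1] using hx.2)).continuousAt.comp (x := (x, z)) (f := fun y : ℂ × ℂ ↦ y.1 / y.2)
      (by fun_prop (disch := assumption))

lemma differentiableAt_egammaPair_left (hp : ‖p‖ < 1) (hq : ‖q‖ < 1) {x z : ℂ}
    (hx : x ∈ annulus 0 1) (hz : ‖z‖ = 1) :
    DifferentiableAt ℂ (fun x ↦ egammaPair p q x z) x := by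
  have hx0 := ne_zero_of_mem_annulus le_rfl hx
  have hz0 : z ≠ 0 := norm_ne_zero_iff.1 (hz ▸ one_ne_zero)
  refine .mul ?_ ?_
  · exact (differentiableAt_egamma hp hq (mul_ne_zero hx0 hz0)
      (by simpa [hz] using hx.2)).comp (f := fun x ↦ x * z) x (by fun_prop)
  · exact (differentiableAt_egamma hp hq (div_ne_zero hx0 hz0)
      (by simpa [hz] using hx.2)).comp (f := fun x ↦ x / z) x (by fun_prop)

lemma continuousOn_betaWeight (hp : ‖p‖ < 1) (hq : ‖q‖ < 1) :
    ContinuousOn (betaWeight p q) (Metric.sphere 0 1) := fun z hz ↦ by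
  have hz2 : z ^ 2 ≠ 0 := pow_ne_zero 2 (ne_zero_of_mem_unit_sphere ⟨z, hz⟩)
  have hsq : DifferentiableAt ℂ (fun z : ℂ ↦ z ^ 2) z := by fun_prop
  have hdiff : DifferentiableAt ℂ (betaWeight p q) z :=
    ((differentiableAt_theta hp hz2).comp z hsq).mul
      ((differentiableAt_theta hq (inv_ne_zero hz2)).comp (f := fun z ↦ (z ^ 2)⁻¹) z
        (hsq.inv hz2))
  exact hdiff.continuousAt.continuousWithinAt

lemma continuousOn_ellipticBetaIntegrand (hp : ‖p‖ < 1) (hq : ‖q‖ < 1) {t : Multiset ℂ}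
    (ht : ∀ x ∈ t, x ∈ annulus 0 1) :
    ContinuousOn (ellipticBetaIntegrand p q t) (Metric.sphere 0 1) := by
  refine .mul (continuousOn_multiset_prod t fun x hx ↦ ?_) (continuousOn_betaWeight hp hq)
  exact (continuousOn_egammaPair hp hq).comp (f := fun z ↦ (x, z)) (by fun_prop)
    fun z hz ↦ ⟨ht x hx, hz⟩

/-- The function whose `q`-difference expresses the contiguity relation between integrands of
elliptic beta integrals. -/
noncomputable def betaCertificate (p q : ℂ) (t : Multiset ℂ) (z : ℂ) : ℂ :=
  (t.map fun x ↦ egamma (x * z) p q * egamma (q * x / z) p q).prod *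
    (z ^ 3 * theta q (z ^ 2)⁻¹)

lemma betaCertificate_eq (hp : ‖p‖ < 1) (hq0 : q ≠ 0) (hq : ‖q‖ < 1) {t : Multiset ℂ}
    (ht : ∀ x ∈ t, ‖x‖ < 1) {z : ℂ} (hz : ‖z‖ = 1) :
    betaCertificate p q t z = z ^ 3 * (t.map fun x ↦ theta p (x / z)).prod *
      ((t.map fun x ↦ egammaPair p q x z).prod * theta q (z ^ 2)⁻¹) := by
  have hfactor : (t.map fun x ↦ egamma (x * z) p q * egamma (q * x / z) p q) =
      t.map fun x ↦ theta p (x / z) * egammaPair p q x z :=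
    Multiset.map_congr rfl fun x hx ↦ by
      rw [egammaPair, mul_div_assoc, egamma_mul_left hp hq0 hq (by simpa [hz] using ht x hx)]
      ring
  rw [betaCertificate, hfactor, Multiset.prod_map_mul]
  ring

lemma betaCertificate_mul (hp : ‖p‖ < 1) (hq0 : q ≠ 0) (hq : ‖q‖ < 1) {t : Multiset ℂ}
    (ht : ∀ x ∈ t, ‖x‖ < 1) {z : ℂ} (hz : ‖z‖ = 1) :
    betaCertificate p q t (q * z) = z⁻¹ * (t.map fun x ↦ theta p (x * z)).prod *
      ((t.map fun x ↦ egammaPair p q x z).prod * theta q (z ^ 2)⁻¹) := by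
  have hz0 : z ≠ 0 := norm_ne_zero_iff.1 (hz ▸ one_ne_zero)
  have hfactor : (t.map fun x ↦ egamma (x * (q * z)) p q * egamma (q * x / (q * z)) p q) =
      t.map fun x ↦ theta p (x * z) * egammaPair p q x z :=
    Multiset.map_congr rfl fun x hx ↦ by
      rw [egammaPair, mul_left_comm, mul_div_mul_left _ _ hq0,
        egamma_mul_left hp hq0 hq (by simpa [hz] using ht x hx), mul_assoc]
  have htheta : (q * z) ^ 3 * theta q ((q * z) ^ 2)⁻¹ = z⁻¹ * theta q (z ^ 2)⁻¹ := by
    have hshift : (z ^ 2)⁻¹ = q * (q * ((q * z) ^ 2)⁻¹) := by field_simp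
    rw [hshift, theta_self_mul hq0 hq (by positivity), theta_self_mul hq0 hq (by positivity)]
    field_simp
  rw [betaCertificate, hfactor, htheta, Multiset.prod_map_mul]
  ring

lemma differentiableAt_betaCertificate (hp : ‖p‖ < 1) (hq0 : q ≠ 0) (hq : ‖q‖ < 1)
    {t : Multiset ℂ} (ht : ∀ x ∈ t, x ∈ annulus 0 1) {z : ℂ} (hqz : ‖q‖ ≤ ‖z‖) (hz : ‖z‖ ≤ 1) :
    DifferentiableAt ℂ (betaCertificate p q t) z := by
  have hz0 : z ≠ 0 := norm_pos_iff.1 ((norm_pos_iff.2 hq0).trans_le hqz)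
  refine .mul (differentiableAt_multiset_prod_map fun x hx ↦ .mul ?_ ?_)
    ((differentiableAt_pow 3).mul ((differentiableAt_theta hq (by positivity)).comp z
      ((differentiableAt_pow 2).inv (pow_ne_zero 2 hz0))))
  · have hx0 := ne_zero_of_mem_annulus le_rfl (ht x hx)
    have hxz : ‖x * z‖ < 1 := norm_mul_lt_one_of_le_one (ht x hx).2 hz
    exact (differentiableAt_egamma hp hq (mul_ne_zero hx0 hz0) hxz).comp z (by fun_prop)
  · have hx0 := ne_zero_of_mem_annulus le_rfl (ht x hx)
    have hqxz : ‖q * x / z‖ < 1 := by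
      rw [mul_div_right_comm, norm_mul, norm_div]
      exact mul_lt_one_of_nonneg_of_lt_one_right (div_le_one_of_le₀ hqz (norm_nonneg z))
        (norm_nonneg x) (ht x hx).2
    exact (differentiableAt_egamma hp hq (by positivity) hqxz).comp z
      (by fun_prop (disch := assumption))

lemma ellipticBetaIntegrand_contiguity (hp0 : p ≠ 0) (hp : ‖p‖ < 1) (hq0 : q ≠ 0) (hq : ‖q‖ < 1)
    {a s z : ℂ} {b : Multiset ℂ} (hb : b.card = 4)
    (ht : ∀ x ∈ a ::ₘ s ::ₘ b, x ∈ annulus 0 1) (hbal : (a ::ₘ s ::ₘ b).prod = p)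
    (hz : ‖z‖ = 1) :
    (b.map fun x ↦ theta p (s * x)).prod * ellipticBetaIntegrand p q ((q * a) ::ₘ s ::ₘ b) z -
        (b.map fun x ↦ theta p (a * x)).prod * ellipticBetaIntegrand p q (a ::ₘ (q * s) ::ₘ b) z =
      -a * theta p (s / a) * (betaCertificate p q (a ::ₘ s ::ₘ b) (q * z) -
        betaCertificate p q (a ::ₘ s ::ₘ b) z) := by
  have hz0 : z ≠ 0 := norm_ne_zero_iff.1 (hz ▸ one_ne_zero)
  have hlt (x : ℂ) (hx : x ∈ a ::ₘ s ::ₘ b) : ‖x‖ < 1 := (ht x hx).2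
  have hne (x y : ℂ) (hxy : {x, y} ≤ b) : theta p (x * y) ≠ 0 := by
    have hlt' : ({x, y} : Multiset ℂ) < a ::ₘ s ::ₘ b :=
      hxy.trans_lt ((Multiset.lt_cons_self b s).trans (Multiset.lt_cons_self _ a))
    rw [← Multiset.prod_pair]
    refine theta_ne_zero hp ?_ (prod_mem_annulus (by simp) fun w hw ↦
      ht w (Multiset.mem_of_le hlt'.le hw)).2
    rw [← hbal]
    exact norm_prod_lt_norm_prod hlt' ht
  have hfour := theta_four_term hp0 hp hb hz0
    (by simpa only [Multiset.prod_cons] using hbal) hne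
  rw [Multiset.cons_swap a (q * s), ellipticBetaIntegrand_mul_cons hp hq0 hq (hlt a (by simp)) hz,
    ellipticBetaIntegrand_mul_cons hp hq0 hq (hlt s (by simp)) hz, Multiset.cons_swap s a,
    betaCertificate_mul hp hq0 hq hlt hz, betaCertificate_eq hp hq0 hq hlt hz,
    ellipticBetaIntegrand, betaWeight]
  simp only [Multiset.map_cons, Multiset.prod_cons] at hfour ⊢
  linear_combination (egammaPair p q a z * (egammaPair p q s z *
    (b.map fun x ↦ egammaPair p q x z).prod) * theta q (z ^ 2)⁻¹) * hfour

lemma ellipticBetaIntegral_contiguity (hp0 : p ≠ 0) (hp : ‖p‖ < 1) (hq0 : q ≠ 0) (hq : ‖q‖ < 1)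
    {a s : ℂ} {b : Multiset ℂ} (hb : b.card = 4)
    (ht : ∀ x ∈ a ::ₘ s ::ₘ b, x ∈ annulus 0 1) (hbal : (a ::ₘ s ::ₘ b).prod = p) :
    (b.map fun x ↦ theta p (s * x)).prod * ellipticBetaIntegral p q ((q * a) ::ₘ s ::ₘ b) =
      (b.map fun x ↦ theta p (a * x)).prod * ellipticBetaIntegral p q (a ::ₘ (q * s) ::ₘ b) := by
  have hcont_mul : ContinuousOn (fun z ↦ betaCertificate p q (a ::ₘ s ::ₘ b) (q * z))
      (Metric.sphere 0 1) := fun z hz ↦ by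
    have hqz : ‖q * z‖ = ‖q‖ := by rw [norm_mul, mem_sphere_zero_iff_norm.1 hz, mul_one]
    exact ((differentiableAt_betaCertificate hp hq0 hq ht hqz.ge (hqz.trans_le hq.le)).comp z
      (differentiableAt_id.const_mul q)).continuousAt.continuousWithinAt
  have hcont : ContinuousOn (betaCertificate p q (a ::ₘ s ::ₘ b)) (Metric.sphere 0 1) :=
    fun z hz ↦ by
      have hz1 : ‖z‖ = 1 := mem_sphere_zero_iff_norm.1 hz
      exact (differentiableAt_betaCertificate hp hq0 hq ht (hz1 ▸ hq.le)
        hz1.le).continuousAt.continuousWithinAt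
  have ht_left : ∀ x ∈ (q * a) ::ₘ s ::ₘ b, x ∈ annulus 0 1 := by
    simp only [Multiset.forall_mem_cons] at ht ⊢
    exact ⟨mul_mem_annulus hq0 hq ht.1, ht.2⟩
  have ht_right : ∀ x ∈ a ::ₘ (q * s) ::ₘ b, x ∈ annulus 0 1 := by
    simp only [Multiset.forall_mem_cons] at ht ⊢
    exact ⟨ht.1, mul_mem_annulus hq0 hq ht.2.1, ht.2.2⟩
  rw [← sub_eq_zero, ellipticBetaIntegral, ellipticBetaIntegral, ← circleAverage_const_mul,
    ← circleAverage_const_mul, ← circleAverage_fun_sub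
      ((continuousOn_const.fun_mul
        (continuousOn_ellipticBetaIntegrand hp hq ht_left)).circleIntegrable zero_le_one)
      ((continuousOn_const.fun_mul
        (continuousOn_ellipticBetaIntegrand hp hq ht_right)).circleIntegrable zero_le_one),
    circleAverage_congr_sphere fun z hz ↦
      ellipticBetaIntegrand_contiguity hp0 hp hq0 hq hb ht hbal (by simpa using hz),
    circleAverage_const_mul, circleAverage_fun_sub (hcont_mul.circleIntegrable zero_le_one)
      (hcont.circleIntegrable zero_le_one), circleAverage_comp_mul_eq hq0 hq.le fun z hqz hz ↦
      differentiableAt_betaCertificate hp hq0 hq ht hqz hz, sub_self, mul_zero]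

/-- The quotient of the two sides of the elliptic beta integral, up to a constant. -/
noncomputable def betaRatio (p q : ℂ) (t : Multiset ℂ) : ℂ :=
  ellipticBetaIntegral p q t / pairProduct p q t

lemma betaRatio_contiguity (hp0 : p ≠ 0) (hp : ‖p‖ < 1) (hq0 : q ≠ 0) (hq : ‖q‖ < 1)
    {a s : ℂ} {b : Multiset ℂ} (hb : b.card = 4)
    (ht : ∀ x ∈ a ::ₘ s ::ₘ b, x ∈ annulus 0 1) (hbal : (a ::ₘ s ::ₘ b).prod = p) :
    betaRatio p q ((q * a) ::ₘ s ::ₘ b) = betaRatio p q (a ::ₘ (q * s) ::ₘ b) := by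
  have hlt (x : ℂ) (hx : x ∈ a ::ₘ s ::ₘ b) : ‖x‖ < 1 := (ht x hx).2
  have hadm := ht
  simp only [Multiset.forall_mem_cons] at hadm
  have hleft := pairProduct_ne_zero (p := p) hp hq (t := (q * a) ::ₘ s ::ₘ b)
    (by simpa using ⟨mul_mem_annulus hq0 hq hadm.1, hadm.2⟩) (by simp [hb])
    (by rw [Multiset.prod_cons, mul_assoc, ← Multiset.prod_cons, hbal, mul_comm])
  have hright := pairProduct_ne_zero (p := p) hp hq (t := (q * s) ::ₘ a ::ₘ b)
    (by simpa using ⟨mul_mem_annulus hq0 hq hadm.2.1, hadm.1, hadm.2.2⟩) (by simp [hb])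
    (by rw [Multiset.prod_cons, mul_assoc, ← Multiset.prod_cons, Multiset.cons_swap, hbal,
      mul_comm])
  have hint := ellipticBetaIntegral_contiguity hp0 hp hq0 hq hb ht hbal
  have hpair_left := pairProduct_mul_cons hp hq0 hq hadm.1.2 (t := s ::ₘ b) fun x hx ↦
    hlt x (Multiset.mem_cons_of_mem hx)
  have hpair_right := pairProduct_mul_cons hp hq0 hq hadm.2.1.2 (t := a ::ₘ b) fun x hx ↦
    hlt x (Multiset.cons_swap a s b ▸ Multiset.mem_cons_of_mem hx)
  rw [Multiset.cons_swap a (q * s)] at hint ⊢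
  rw [Multiset.cons_swap s a] at hpair_right
  rw [Multiset.map_cons, Multiset.prod_cons] at hpair_left hpair_right
  rw [mul_comm s a] at hpair_right
  rw [betaRatio, betaRatio, div_eq_div_iff hleft hright, hpair_left, hpair_right]
  linear_combination theta p (a * s) * pairProduct p q (a ::ₘ s ::ₘ b) * hint

end BetaIntegral

section Analyticity

variable {p q : ℂ} {T : Multiset (ℂ → ℂ)} {U : Set ℂ}

lemma differentiableOn_ellipticBetaIntegral (hp : ‖p‖ < 1) (hq : ‖q‖ < 1) (hU : IsOpen U)
    (hT : ∀ f ∈ T, DifferentiableOn ℂ f U) (hTU : ∀ f ∈ T, Set.MapsTo f U (annulus 0 1)) :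
    DifferentiableOn ℂ (fun x ↦ ellipticBetaIntegral p q (T.map fun f ↦ f x)) U := by
  refine differentiableOn_circleAverage hU ?_ fun z hz x hx ↦ ?_
  · simp only [Function.uncurry_def, ellipticBetaIntegrand, Multiset.map_map, Function.comp_def]
    refine .mul (continuousOn_multiset_prod T fun f hf ↦ ?_)
      ((continuousOn_betaWeight hp hq).comp continuousOn_snd fun y hy ↦ hy.2)
    exact (continuousOn_egammaPair hp hq).comp (f := fun y : ℂ × ℂ ↦ (f y.1, y.2))
      (((hT f hf).continuousOn.comp continuousOn_fst fun y hy ↦ hy.1).prodMk continuousOn_snd)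
      fun y hy ↦ ⟨hTU f hf hy.1, hy.2⟩
  · simp only [ellipticBetaIntegrand, Multiset.map_map, Function.comp_def]
    refine DifferentiableAt.differentiableWithinAt
      ((differentiableAt_multiset_prod_map fun f hf ↦ ?_).mul_const _)
    exact (differentiableAt_egammaPair_left hp hq (hTU f hf hx) (by simpa using hz)).comp x
      ((hT f hf).differentiableAt (hU.mem_nhds hx))

lemma differentiableOn_pairProduct (hp : ‖p‖ < 1) (hq : ‖q‖ < 1) (hU : IsOpen U)
    (hT : ∀ f ∈ T, DifferentiableOn ℂ f U) (hTU : ∀ f ∈ T, Set.MapsTo f U (annulus 0 1)) :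
    DifferentiableOn ℂ (fun x ↦ pairProduct p q (T.map fun f ↦ f x)) U := fun x hx ↦ by
  simp only [pairProduct, Multiset.powersetCard_map, Multiset.map_map, Function.comp_def]
  refine DifferentiableAt.differentiableWithinAt
    (differentiableAt_multiset_prod_map fun S hS ↦ ?_)
  obtain ⟨hST, hS2⟩ := Multiset.mem_powersetCard.1 hS
  have hmem : (S.map fun f ↦ f x).prod ∈ annulus 0 1 := by
    refine prod_mem_annulus (fun h ↦ ?_) fun y hy ↦ ?_
    · simp [Multiset.map_eq_zero.1 h] at hS2
    · obtain ⟨f, hf, rfl⟩ := Multiset.mem_map.1 hy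
      exact hTU f (Multiset.mem_of_le hST hf) hx
  exact (differentiableAt_egamma hp hq (ne_zero_of_mem_annulus le_rfl hmem) hmem.2).comp x
    (differentiableAt_multiset_prod_map fun f hf ↦
      (hT f (Multiset.mem_of_le hST hf)).differentiableAt (hU.mem_nhds hx))

lemma differentiableOn_betaRatio (hp : ‖p‖ < 1) (hq : ‖q‖ < 1) (hU : IsOpen U)
    (hT : ∀ f ∈ T, DifferentiableOn ℂ f U) (hTU : ∀ f ∈ T, Set.MapsTo f U (annulus 0 1))
    (hcard : 2 < T.card) (hprod : ∀ x ∈ U, (T.map fun f ↦ f x).prod = p * q) :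
    DifferentiableOn ℂ (fun x ↦ betaRatio p q (T.map fun f ↦ f x)) U := by
  refine (differentiableOn_ellipticBetaIntegral hp hq hU hT hTU).div
    (differentiableOn_pairProduct hp hq hU hT hTU) fun x hx ↦
      pairProduct_ne_zero hp hq (fun y hy ↦ ?_) (by simpa using hcard) (hprod x hx)
  obtain ⟨f, hf, rfl⟩ := Multiset.mem_map.1 hy
  exact hTU f hf hx

end Analyticity

lemma eq_of_forall_cons_eq {α β : Type*} {S : Set α} {n : ℕ} {f : Multiset α → β}
    (hf : ∀ w : Multiset α, w.card = n → (∀ z ∈ w, z ∈ S) →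
      ∀ x ∈ S, ∀ y ∈ S, f (x ::ₘ w) = f (y ::ₘ w))
    {u v : Multiset α} (hu : u.card = n + 1) (huS : ∀ x ∈ u, x ∈ S) (hv : v.card = n + 1)
    (hvS : ∀ x ∈ v, x ∈ S) : f u = f v := by
  induction n generalizing u v f with
  | zero =>
    obtain ⟨x, rfl⟩ := Multiset.card_eq_one.1 hu
    obtain ⟨y, rfl⟩ := Multiset.card_eq_one.1 hv
    exact hf 0 rfl (by simp) x (huS x (by simp)) y (hvS y (by simp))
  | succ n ih =>
    obtain ⟨x, u, rfl, hu'⟩ := Multiset.card_eq_succ_iff.1 hu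
    obtain ⟨y, v, rfl, hv'⟩ := Multiset.card_eq_succ_iff.1 hv
    rw [Multiset.forall_mem_cons] at huS hvS
    calc f (x ::ₘ u) = f (x ::ₘ v) := by
          refine ih (f := fun u ↦ f (x ::ₘ u)) (fun w hw hwS a ha b hb ↦ ?_) hu' huS.2 hv' hvS.2
          rw [Multiset.cons_swap x, Multiset.cons_swap x]
          exact hf (x ::ₘ w) (by simp [hw]) (Multiset.forall_mem_cons.2 ⟨huS.1, hwS⟩) a ha b hb
      _ = f (y ::ₘ v) := hf v hv' hvS.2 x huS.1 y hvS.1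

section Constancy

/-- The ratio `betaRatio` with the last parameter determined by the balancing condition. -/
noncomputable def completedRatio (p q : ℂ) (v : Multiset ℂ) : ℂ :=
  betaRatio p q ((p * q / v.prod) ::ₘ v)

variable {p q : ℂ}

lemma div_mem_annulus {a b : ℂ} (ha : a ≠ 0) (hab : ‖a‖ < ‖b‖) : a / b ∈ annulus 0 1 := by
  have hb : 0 < ‖b‖ := (norm_nonneg a).trans_lt hab
  exact ⟨norm_pos_iff.2 (div_ne_zero ha (norm_pos_iff.1 hb)), by
    rwa [norm_div, div_lt_one hb]⟩

lemma differentiableOn_completedRatio_cons (hp0 : p ≠ 0) (hp : ‖p‖ < 1) (hq0 : q ≠ 0)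
    (hq : ‖q‖ < 1) {w : Multiset ℂ} (hcard : 0 < w.card) (hw : ∀ y ∈ w, y ∈ annulus 0 1) :
    DifferentiableOn ℂ (fun x ↦ completedRatio p q (x ::ₘ w))
      (annulus ‖p * q / w.prod‖ 1) := by
  have hpq0 : p * q ≠ 0 := mul_ne_zero hp0 hq0
  have hw0 : w.prod ≠ 0 := Multiset.prod_ne_zero fun h ↦ ne_zero_of_mem_annulus le_rfl (hw 0 h) rfl
  have hx0 {x : ℂ} (hx : x ∈ annulus ‖p * q / w.prod‖ 1) : x ≠ 0 :=
    ne_zero_of_mem_annulus (norm_nonneg _) hx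
  let T : Multiset (ℂ → ℂ) := (fun x ↦ p * q / (x * w.prod)) ::ₘ id ::ₘ w.map (Function.const ℂ)
  have hT : (fun x ↦ completedRatio p q (x ::ₘ w)) = fun x ↦ betaRatio p q (T.map fun f ↦ f x) := by
    simp [completedRatio, T, Function.comp_def]
  rw [hT]
  refine differentiableOn_betaRatio hp hq (isOpen_annulus _ _) ?_ ?_ (by simpa [T] using hcard)
    fun x hx ↦ ?_
  · simp only [T, Multiset.forall_mem_cons, Multiset.forall_mem_map_iff]
    refine ⟨fun x hx ↦ ?_, differentiableOn_id, fun y _ ↦ differentiableOn_const y⟩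
    have : x * w.prod ≠ 0 := mul_ne_zero (hx0 hx) hw0
    fun_prop (disch := assumption)
  · simp only [T, Multiset.forall_mem_cons, Multiset.forall_mem_map_iff]
    refine ⟨fun x hx ↦ div_mem_annulus hpq0 ?_, fun x hx ↦ ⟨norm_pos_iff.2 (hx0 hx), hx.2⟩,
      fun y hy _ _ ↦ hw y hy⟩
    rw [norm_mul x, ← div_lt_iff₀ (norm_pos_iff.2 hw0), ← norm_div]
    exact hx.1
  · have := hx0 hx
    simp only [T, Multiset.map_cons, Multiset.prod_cons, Multiset.map_map, Function.comp_def,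
      Function.const_apply, Multiset.map_id', id_eq]
    field_simp

lemma completedRatio_mul_cons (hp0 : p ≠ 0) (hp : ‖p‖ < 1) (hq0 : q ≠ 0) (hq : ‖q‖ < 1)
    {x : ℂ} {w : Multiset ℂ} (hcard : w.card = 4) (ht : ∀ y ∈ x ::ₘ w, y ∈ annulus 0 1)
    (hpw : ‖p‖ < ‖(x ::ₘ w).prod‖) :
    completedRatio p q ((q * x) ::ₘ w) = completedRatio p q (x ::ₘ w) := by
  have hprod0 : (x ::ₘ w).prod ≠ 0 := norm_pos_iff.1 ((norm_nonneg p).trans_lt hpw)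
  have hleft : p * q / ((q * x) ::ₘ w).prod = p / (x ::ₘ w).prod := by
    rw [Multiset.prod_cons, mul_assoc, ← Multiset.prod_cons, mul_comm, mul_div_mul_left _ _ hq0]
  rw [completedRatio, completedRatio, hleft, mul_comm p q, mul_div_assoc]
  refine (betaRatio_contiguity hp0 hp hq0 hq hcard ?_ ?_).symm
  · exact Multiset.forall_mem_cons.2 ⟨div_mem_annulus hp0 hpw, ht⟩
  · rw [Multiset.prod_cons, div_mul_cancel₀ _ hprod0]

lemma completedRatio_cons_eq (hp0 : p ≠ 0) (hp : ‖p‖ < 1) (hq0 : q ≠ 0) (hq : ‖q‖ < 1)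
    {w : Multiset ℂ} (hcard : w.card = 4) (hw : ∀ y ∈ w, y ∈ annulus 0 1)
    (hpw : ‖p‖ < ‖w.prod‖) {x y : ℂ} (hx : x ∈ annulus ‖p * q / w.prod‖ 1)
    (hy : y ∈ annulus ‖p * q / w.prod‖ 1) :
    completedRatio p q (x ::ₘ w) = completedRatio p q (y ::ₘ w) := by
  have hw0 : 0 < ‖w.prod‖ := (norm_nonneg p).trans_lt hpw
  have hq_pos : 0 < ‖q‖ := norm_pos_iff.2 hq0
  refine eq_of_forall_mul_eq_of_mem_annulus (g := fun x ↦ completedRatio p q (x ::ₘ w)) hq0 hq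
    (norm_nonneg _) ?_ (differentiableOn_completedRatio_cons hp0 hp hq0 hq (by omega) hw)
    (fun x hqx hx ↦ ?_) hx hy
  · rw [norm_div, norm_mul, div_lt_iff₀ hw0, mul_comm]
    gcongr
  · rw [norm_div, norm_mul, norm_mul, div_lt_iff₀ hw0, mul_comm, mul_assoc,
      mul_lt_mul_iff_right₀ hq_pos, ← norm_mul, ← Multiset.prod_cons] at hqx
    have hx0 : x ≠ 0 := by
      rintro rfl
      simp [(norm_nonneg p).not_gt] at hqx
    exact completedRatio_mul_cons hp0 hp hq0 hq hcard
      (Multiset.forall_mem_cons.2 ⟨⟨norm_pos_iff.2 hx0, hx⟩, hw⟩) hqx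

lemma pow_card_le_norm_prod {r : ℝ} (hr : 0 ≤ r) {w : Multiset ℂ} (hw : ∀ x ∈ w, r ≤ ‖x‖) :
    r ^ w.card ≤ ‖w.prod‖ := by
  induction w using Multiset.induction with
  | empty => simp
  | cons a w ih =>
    rw [Multiset.forall_mem_cons] at hw
    rw [Multiset.card_cons, pow_succ', Multiset.prod_cons, norm_mul]
    exact mul_le_mul hw.1 (ih hw.2) (by positivity) (norm_nonneg a)

lemma exists_forall_completedRatio_eq (hp0 : p ≠ 0) (hp : ‖p‖ < 1) (hq0 : q ≠ 0) (hq : ‖q‖ < 1) :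
    ∃ r < 1, ∃ c, ∀ v : Multiset ℂ, v.card = 5 → (∀ x ∈ v, x ∈ annulus r 1) →
      completedRatio p q v = c := by
  have hpow : Tendsto (fun r : ℝ ↦ r ^ 4) (𝓝[<] 1) (𝓝 1) :=
    ((continuous_pow 4).tendsto' 1 1 (one_pow 4)).mono_left nhdsWithin_le_nhds
  obtain ⟨r, hpr, hqr, hr1 : r < 1⟩ := ((hpow.eventually_const_lt hp).and
    (((lt_mem_nhds hq).filter_mono nhdsWithin_le_nhds).and self_mem_nhdsWithin)).exists
  have hr0 : 0 < r := (norm_nonneg q).trans_lt hqr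
  obtain ⟨ρ, hrρ, hρ1⟩ := exists_between hr1
  have hρ : (ρ : ℂ) ∈ annulus r 1 := by
    simpa [annulus, abs_of_pos (hr0.trans hrρ)] using ⟨hrρ, hρ1⟩
  refine ⟨r, hr1, completedRatio p q (Multiset.replicate 5 ρ), fun v hv hvr ↦ ?_⟩
  refine eq_of_forall_cons_eq (S := annulus r 1) (fun w hw hwr x hx y hy ↦ ?_) hv hvr (by simp)
    fun x hx ↦ Multiset.eq_of_mem_replicate hx ▸ hρ
  have hpw : ‖p‖ < ‖w.prod‖ :=
    hpr.trans_le (hw ▸ pow_card_le_norm_prod hr0.le fun x hx ↦ (hwr x hx).1.le)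
  have hpqw : ‖p * q / w.prod‖ ≤ r := by
    rw [norm_div, norm_mul, div_le_iff₀ ((norm_nonneg p).trans_lt hpw), mul_comm]
    exact mul_le_mul hqr.le hpw.le (norm_nonneg p) hr0.le
  exact completedRatio_cons_eq hp0 hp hq0 hq hw (fun x hx ↦ ⟨hr0.trans (hwr x hx).1, (hwr x hx).2⟩)
    hpw ⟨hpqw.trans_lt hx.1, hx.2⟩ ⟨hpqw.trans_lt hy.1, hy.2⟩

-- The parameters of `u` are released from `annulus r 1` one at a time, by the identity theorem.
lemma completedRatio_eq_of_forall_mem_annulus (hp0 : p ≠ 0) (hp : ‖p‖ < 1) (hq0 : q ≠ 0)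
    (hq : ‖q‖ < 1) {r : ℝ} (hr : r < 1) {c : ℂ}
    (hc : ∀ v : Multiset ℂ, v.card = 5 → (∀ x ∈ v, x ∈ annulus r 1) → completedRatio p q v = c)
    {u w : Multiset ℂ} (hcard : (u + w).card = 5) (hw : ∀ x ∈ w, x ∈ annulus r 1)
    (huw : ∀ x ∈ u + w, x ∈ annulus 0 1) (hpq : ‖p * q‖ < ‖(u + w).prod‖) :
    completedRatio p q (u + w) = c := by
  induction u using Multiset.induction generalizing w with
  | empty => exact hc _ hcard (by simpa using hw)
  | cons a u ih =>
    rw [Multiset.cons_add] at hcard huw hpq ⊢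
    rw [Multiset.forall_mem_cons] at huw
    have hprod_pos : 0 < ‖(u + w).prod‖ := norm_pos_iff.2 <| Multiset.prod_ne_zero fun h ↦
      ne_zero_of_mem_annulus le_rfl (huw.2 0 h) rfl
    have hlt_iff (x : ℂ) : ‖p * q / (u + w).prod‖ < ‖x‖ ↔ ‖p * q‖ < ‖(x ::ₘ (u + w)).prod‖ := by
      rw [norm_div, div_lt_iff₀ hprod_pos, Multiset.prod_cons, norm_mul x]
    have ha : a ∈ annulus ‖p * q / (u + w).prod‖ 1 := ⟨(hlt_iff a).2 hpq, huw.1.2⟩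
    have hk1 := ha.1.trans ha.2
    obtain ⟨ρ, hρ, hρ1⟩ := exists_between (max_lt hk1 hr)
    have hρmem : (ρ : ℂ) ∈ annulus (max ‖p * q / (u + w).prod‖ r) 1 := by
      have hρ0 : 0 < ρ := (le_max_of_le_left (norm_nonneg _)).trans_lt hρ
      rw [annulus, Set.mem_preimage, norm_real, Real.norm_of_nonneg hρ0.le]
      exact ⟨hρ, hρ1⟩
    have hnear : (fun x ↦ completedRatio p q (x ::ₘ (u + w))) =ᶠ[𝓝 (ρ : ℂ)] fun _ ↦ c := by
      filter_upwards [(isOpen_annulus _ _).mem_nhds hρmem] with x hx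
      have hkx := (le_max_left _ _).trans_lt hx.1
      rw [← Multiset.add_cons]
      refine ih (by simpa using hcard) (Multiset.forall_mem_cons.2
        ⟨⟨(le_max_right _ _).trans_lt hx.1, hx.2⟩, hw⟩) ?_ ?_ <;> rw [Multiset.add_cons]
      · exact Multiset.forall_mem_cons.2 ⟨⟨(norm_nonneg _).trans_lt hkx, hx.2⟩, huw.2⟩
      · exact (hlt_iff x).1 hkx
    have hdiff := differentiableOn_completedRatio_cons hp0 hp hq0 hq
      (by rw [Multiset.card_cons] at hcard; omega) huw.2
    exact (hdiff.analyticOnNhd (isOpen_annulus _ _)).eqOn_of_preconnected_of_eventuallyEq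
      analyticOnNhd_const (isPreconnected_annulus (norm_nonneg _))
      ⟨(le_max_left _ _).trans_lt hρmem.1, hρmem.2⟩ hnear ha

lemma exists_forall_betaRatio_eq (hp0 : p ≠ 0) (hp : ‖p‖ < 1) (hq0 : q ≠ 0) (hq : ‖q‖ < 1) :
    ∃ c, ∀ t : Multiset ℂ, t.card = 6 → (∀ x ∈ t, x ∈ annulus 0 1) → t.prod = p * q →
      betaRatio p q t = c := by
  obtain ⟨r, hr, c, hc⟩ := exists_forall_completedRatio_eq hp0 hp hq0 hq
  refine ⟨c, fun t hcard ht hprod ↦ ?_⟩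
  obtain ⟨a, v, rfl, hv⟩ := Multiset.card_eq_succ_iff.1 hcard
  have hlt : ‖p * q‖ < ‖v.prod‖ := hprod ▸ norm_prod_lt_norm_prod (Multiset.lt_cons_self v a) ht
  have ha : p * q / v.prod = a := by
    rw [← hprod, Multiset.prod_cons,
      mul_div_cancel_right₀ _ (norm_pos_iff.1 ((norm_nonneg _).trans_lt hlt))]
  rw [Multiset.forall_mem_cons] at ht
  simpa [completedRatio, ha] using completedRatio_eq_of_forall_mem_annulus hp0 hp hq0 hq hr hc
    (u := v) (w := 0) (by simpa using hv) (by simp) (by simpa using ht.2) (by simpa using hlt)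

end Constancy

open scoped ComplexConjugate

section PoissonKernel

lemma ofReal_poissonKernel_zero (w : ℂ) {z : ℂ} (hz : ‖z‖ = 1) :
    (poissonKernel 0 w z : ℂ) = (1 - w * conj w) / ((1 - w / z) * (1 - conj w * z)) := by
  have hz0 : z ≠ 0 := norm_ne_zero_iff.1 (hz ▸ one_ne_zero)
  have hden : (z - w) * conj (z - w) = (1 - w / z) * (1 - conj w * z) := by
    rw [map_sub, ← Complex.inv_eq_conj hz]
    field_simp
  simp only [poissonKernel, sub_zero, hz, one_pow, ofReal_div, ofReal_sub, ofReal_one, ofReal_pow,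
    ← Complex.mul_conj', hden]

lemma continuousOn_poissonKernel_zero {w : ℂ} (hw : ‖w‖ < 1) :
    ContinuousOn (poissonKernel 0 w) (Metric.sphere 0 1) := by
  have hne (z : ℂ) (hz : z ∈ Metric.sphere 0 1) : ‖z - w‖ ^ 2 ≠ 0 := by
    rw [mem_sphere_zero_iff_norm] at hz
    refine pow_ne_zero 2 (norm_ne_zero_iff.2 (sub_ne_zero.2 ?_))
    rintro rfl
    exact hw.ne hz
  unfold poissonKernel
  simp only [sub_zero]
  fun_prop (disch := assumption)

lemma circleAverage_poissonKernel_zero {w : ℂ} (hw : ‖w‖ < 1) :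
    circleAverage (poissonKernel 0 w) 0 1 = 1 := by
  have h := (diffContOnCl_const (c := (1 : ℂ))).circleAverage_poissonKernel_smul
    (mem_ball_zero_iff.2 hw)
  simp only [circleAverage, Pi.smul_apply', real_smul, mul_one,
    intervalIntegral.integral_ofReal] at h
  exact_mod_cast h

lemma poissonKernel_zero_nonneg {w z : ℂ} (hw : ‖w‖ < 1) (hz : ‖z‖ = 1) :
    0 ≤ poissonKernel 0 w z := by
  have : 0 ≤ 1 - ‖w‖ ^ 2 := by nlinarith [norm_nonneg w]
  simp only [poissonKernel, sub_zero, hz, one_pow]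
  positivity

lemma poissonKernel_zero_le {w z : ℂ} {δ : ℝ} (hδ : 0 < δ) (hw : ‖w‖ < 1) (hz : ‖z‖ = 1)
    (hwz : δ ≤ ‖z - w‖) : poissonKernel 0 w z ≤ (1 - ‖w‖ ^ 2) / δ ^ 2 := by
  have : 0 ≤ 1 - ‖w‖ ^ 2 := by nlinarith [norm_nonneg w]
  simp only [poissonKernel, sub_zero, hz, one_pow]
  gcongr

lemma norm_circleAverage_le {f : ℂ → ℂ} {g : ℂ → ℝ} {c : ℂ} {R : ℝ}
    (hg : CircleIntegrable g c R) (h : ∀ z ∈ Metric.sphere c |R|, ‖f z‖ ≤ g z) :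
    ‖circleAverage f c R‖ ≤ circleAverage g c R := by
  rw [circleAverage, circleAverage, norm_smul, Real.norm_of_nonneg (by positivity), smul_eq_mul]
  gcongr
  exact intervalIntegral.norm_integral_le_of_norm_le two_pi_pos.le
    (.of_forall fun θ _ ↦ h _ (circleMap_mem_sphere' c R θ)) hg

lemma norm_circleAverage_poissonKernel_smul_sub_le {w L : ℂ} {F : ℂ → ℂ} {δ ε C : ℝ}
    (hw : ‖w‖ < 1) (hF : ContinuousOn F (Metric.sphere 0 1)) (hδ : 0 < δ) (hε : 0 ≤ ε)
    (hnear : ∀ z ∈ Metric.sphere 0 1, ‖z - w‖ < δ → ‖F z - L‖ ≤ ε)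
    (hC : ∀ z ∈ Metric.sphere 0 1, ‖F z - L‖ ≤ C) :
    ‖circleAverage (poissonKernel 0 w • F) 0 1 - L‖ ≤ ε + C * ((1 - ‖w‖ ^ 2) / δ ^ 2) := by
  have hP := continuousOn_poissonKernel_zero hw
  have hPL : circleAverage (poissonKernel 0 w • fun _ ↦ L) 0 1 = L :=
    diffContOnCl_const.circleAverage_poissonKernel_smul (mem_ball_zero_iff.2 hw)
  have hC0 : 0 ≤ C := (norm_nonneg _).trans (hC 1 (by simp))
  have hw1 : 0 ≤ 1 - ‖w‖ ^ 2 := by nlinarith [norm_nonneg w]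
  have hbound : ∀ z ∈ Metric.sphere (0 : ℂ) |1|,
      ‖poissonKernel 0 w z • F z - poissonKernel 0 w z • L‖ ≤
        ε • poissonKernel 0 w z + C * ((1 - ‖w‖ ^ 2) / δ ^ 2) := fun z hz ↦ by
    rw [abs_one] at hz
    have hz1 := mem_sphere_zero_iff_norm.1 hz
    have hP0 := poissonKernel_zero_nonneg hw hz1
    rw [← smul_sub, norm_smul, Real.norm_of_nonneg hP0, mul_comm, smul_eq_mul]
    rcases lt_or_ge ‖z - w‖ δ with hzw | hzw
    · exact (mul_le_mul_of_nonneg_right (hnear z hz hzw) hP0).trans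
        (le_add_of_nonneg_right (by positivity))
    · exact (mul_le_mul (hC z hz) (poissonKernel_zero_le hδ hw hz1 hzw) hP0 hC0).trans
        (le_add_of_nonneg_left (by positivity))
  calc ‖circleAverage (poissonKernel 0 w • F) 0 1 - L‖
      = ‖circleAverage (poissonKernel 0 w • F - poissonKernel 0 w • fun _ ↦ L) 0 1‖ := by
        rw [circleAverage_sub ((hP.smul hF).circleIntegrable zero_le_one)
          ((hP.smul continuousOn_const).circleIntegrable zero_le_one), hPL]
    _ ≤ circleAverage (fun z ↦ ε • poissonKernel 0 w z + C * ((1 - ‖w‖ ^ 2) / δ ^ 2)) 0 1 :=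
        norm_circleAverage_le (((hP.fun_const_smul ε).add
          continuousOn_const).circleIntegrable zero_le_one) hbound
    _ = ε + C * ((1 - ‖w‖ ^ 2) / δ ^ 2) := by
        rw [circleAverage_fun_add ((hP.fun_const_smul ε).circleIntegrable zero_le_one)
          (continuousOn_const.circleIntegrable zero_le_one), circleAverage_fun_smul,
          circleAverage_poissonKernel_zero hw, circleAverage_const, smul_eq_mul, mul_one]

lemma tendsto_circleAverage_poissonKernel_smul {ι : Type*} {l : Filter ι} {w : ι → ℂ} {ζ : ℂ}
    {F : ι → ℂ → ℂ} {L : ℂ} {M : ℝ} (hw : ∀ᶠ i in l, ‖w i‖ < 1) (hwζ : Tendsto w l (𝓝 ζ))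
    (hζ : ‖ζ‖ = 1) (hF : ∀ᶠ i in l, ContinuousOn (F i) (Metric.sphere 0 1))
    (hFM : ∀ᶠ i in l, ∀ z ∈ Metric.sphere (0 : ℂ) 1, ‖F i z‖ ≤ M)
    (hFL : Tendsto (Function.uncurry F) (l ×ˢ 𝓝[Metric.sphere 0 1] ζ) (𝓝 L)) :
    Tendsto (fun i ↦ circleAverage (poissonKernel 0 (w i) • F i) 0 1) l (𝓝 L) := by
  refine Metric.tendsto_nhds.2 fun ε hε ↦ ?_
  obtain ⟨S, hS, T, hT, hST⟩ := eventually_prod_iff.1 (Metric.tendsto_nhds.1 hFL _ (half_pos hε))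
  obtain ⟨δ, hδ, hδT⟩ := Metric.mem_nhdsWithin_iff.1 hT
  have hfar : Tendsto (fun i ↦ (M + ‖L‖) * ((1 - ‖w i‖ ^ 2) / (δ / 2) ^ 2)) l (𝓝 0) := by
    simpa [hζ] using ((tendsto_const_nhds (x := (1 : ℝ))).sub (hwζ.norm.pow 2)).div_const
      ((δ / 2) ^ 2) |>.const_mul (M + ‖L‖)
  filter_upwards [hw, hF, hFM, hS, Metric.tendsto_nhds.1 hwζ _ (half_pos hδ),
    hfar.eventually_lt_const (half_pos hε)] with i hwi hFi hFMi hSi hwζi hfari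
  rw [dist_eq_norm]
  refine (norm_circleAverage_poissonKernel_smul_sub_le (C := M + ‖L‖) hwi hFi (half_pos hδ)
    (half_pos hε).le (fun z hz hzw ↦ ?_) fun z hz ↦ ?_).trans_lt
      ((add_lt_add_right hfari _).trans_eq (add_halves ε))
  · rw [← dist_eq_norm]
    refine (hST hSi (hδT ⟨?_, hz⟩)).le
    rw [Metric.mem_ball]
    linarith [dist_triangle z (w i) ζ, dist_eq_norm z (w i)]
  · exact (norm_sub_le _ _).trans (by gcongr; exact hFMi z hz)

lemma tendsto_circleAverage_poissonKernel_smul_of_continuousOn {w : ℝ → ℂ} {F : ℝ → ℂ → ℂ}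
    {r₀ : ℝ} (hr₀ : r₀ < 1) (hw : ∀ r ∈ Set.Ico r₀ 1, ‖w r‖ < 1)
    (hw_cont : Tendsto w (𝓝[<] 1) (𝓝 (w 1))) (hw1 : ‖w 1‖ = 1)
    (hF : ContinuousOn (Function.uncurry F) (Set.Icc r₀ 1 ×ˢ Metric.sphere 0 1)) :
    Tendsto (fun r ↦ circleAverage (poissonKernel 0 (w r) • F r) 0 1) (𝓝[<] 1)
      (𝓝 (F 1 (w 1))) := by
  have hmem : ∀ᶠ r in 𝓝[<] (1 : ℝ), r ∈ Set.Ico r₀ 1 := Ico_mem_nhdsLT hr₀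
  obtain ⟨M, hM⟩ :=
    (isCompact_Icc.prod (isCompact_sphere (0 : ℂ) 1)).exists_bound_of_continuousOn hF
  refine tendsto_circleAverage_poissonKernel_smul (M := M) (hmem.mono hw) hw_cont hw1 ?_ ?_ ?_
  · filter_upwards [hmem] with r hr
    exact hF.comp (f := fun z ↦ (r, z)) (by fun_prop) fun z hz ↦ ⟨⟨hr.1, hr.2.le⟩, hz⟩
  · filter_upwards [hmem] with r hr z hz
    exact hM (r, z) ⟨⟨hr.1, hr.2.le⟩, hz⟩
  · have hlim := hF (1, w 1) ⟨⟨hr₀.le, le_rfl⟩, by simpa using hw1⟩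
    rw [ContinuousWithinAt, nhdsWithin_prod_eq] at hlim
    refine hlim.mono_left (prod_mono ?_ le_rfl)
    exact nhdsWithin_le_iff.2 (mem_of_superset hmem Set.Ico_subset_Icc_self)

end PoissonKernel

section RegularizedEllipticGamma

/-- The regularisation `(1 - z) Γ(z; p, q)` of the elliptic gamma function at its pole `z = 1`. -/
noncomputable def egammaReg (p q z : ℂ) : ℂ :=
  doublePoch p q (p * q * z⁻¹) / (qpoch (p * z) p * doublePoch p q (q * z))

variable {p q z : ℂ}

lemma egamma_eq_egammaReg_div (hp : ‖p‖ < 1) (hq : ‖q‖ < 1) (z : ℂ) :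
    egamma z p q = egammaReg p q z / (1 - z) := by
  rw [egamma_eq_doublePoch_div hp hq, egammaReg, doublePoch_eq_qpoch_mul_right hp hq z,
    qpoch_eq_mul hp z, div_div]
  ring

lemma continuousAt_egammaReg (hp : ‖p‖ < 1) (hq : ‖q‖ < 1) (hz0 : z ≠ 0) (hz : ‖z‖ ≤ 1) :
    ContinuousAt (egammaReg p q) z := by
  have hP := (differentiable_doublePoch hp hq).continuous
  have hp_cont := (differentiable_qpoch hp).continuous
  refine .div ?_ (.mul ?_ ?_) (mul_ne_zero (qpoch_ne_zero hp (norm_mul_lt_one_of_le_one hp hz))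
    (doublePoch_ne_zero hp hq (norm_mul_lt_one_of_le_one hq hz)))
  · exact hP.continuousAt.comp (f := fun z ↦ p * q * z⁻¹) (by fun_prop (disch := assumption))
  · exact hp_cont.continuousAt.comp (f := fun z ↦ p * z) (by fun_prop)
  · exact hP.continuousAt.comp (f := fun z ↦ q * z) (by fun_prop)

lemma egammaReg_one (hp : ‖p‖ < 1) (hq : ‖q‖ < 1) :
    egammaReg p q 1 = 1 / (qpoch p p * qpoch q q) := by
  have := doublePoch_ne_zero hp hq (norm_mul_lt_one hp hq)
  have := qpoch_ne_zero hp hp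
  have := qpoch_ne_zero hq hq
  rw [egammaReg, inv_one, mul_one, mul_one, mul_one, doublePoch_eq_qpoch_mul_left hp hq q]
  field_simp

lemma egammaReg_neg_one_sq_mul_betaWeight (hp : ‖p‖ < 1) (hq : ‖q‖ < 1) (hz : z ^ 2 = -1) :
    egammaReg p q (-1) ^ 2 * betaWeight p q z = 4 := by
  have hpq := norm_mul_lt_one hp hq
  have hne : egammaReg p q (-1) ≠ 0 :=
    div_ne_zero (doublePoch_ne_zero hp hq (by simpa [inv_neg] using hpq))
      (mul_ne_zero (qpoch_ne_zero hp (by simpa using hp)) (doublePoch_ne_zero hp hq (by simpa)))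
  rw [betaWeight, hz, ← one_div_egamma_mul_egamma_inv hp hq (by simp), inv_neg_one,
    egamma_eq_egammaReg_div hp hq]
  field_simp
  norm_num

end RegularizedEllipticGamma

section Evaluation

variable {p q : ℂ}

/-- The product `egammaReg (x z) * egammaReg (x z⁻¹)`, the regularisation of `egammaPair`. -/
noncomputable def egammaRegPair (p q x z : ℂ) : ℂ :=
  egammaReg p q (x * z) * egammaReg p q (x / z)

lemma egammaPair_eq_egammaRegPair_div (hp : ‖p‖ < 1) (hq : ‖q‖ < 1) (x z : ℂ) :
    egammaPair p q x z = egammaRegPair p q x z / ((1 - x * z) * (1 - x / z)) := by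
  rw [egammaPair, egammaRegPair, egamma_eq_egammaReg_div hp hq, egamma_eq_egammaReg_div hp hq,
    div_mul_div_comm]

lemma continuousOn_egammaRegPair (hp : ‖p‖ < 1) (hq : ‖q‖ < 1) :
    ContinuousOn (Function.uncurry (egammaRegPair p q))
      ((Metric.closedBall 0 1 \ {0}) ×ˢ Metric.sphere 0 1) := by
  rintro ⟨x, z⟩ ⟨⟨hx, hx0 : x ≠ 0⟩, hz⟩
  have hz0 : z ≠ 0 := ne_zero_of_mem_unit_sphere ⟨z, hz⟩
  have hz1 : ‖z‖ = 1 := mem_sphere_zero_iff_norm.1 hz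
  have hx1 : ‖x‖ ≤ 1 := mem_closedBall_zero_iff.1 hx
  refine ContinuousAt.continuousWithinAt (.mul ?_ ?_)
  · exact (continuousAt_egammaReg hp hq (mul_ne_zero hx0 hz0) (by simpa [hz1])).comp (x := (x, z))
      (f := fun y : ℂ × ℂ ↦ y.1 * y.2) (by fun_prop)
  · exact (continuousAt_egammaReg hp hq (div_ne_zero hx0 hz0) (by simpa [hz1])).comp (x := (x, z))
      (f := fun y : ℂ × ℂ ↦ y.1 / y.2) (by fun_prop (disch := assumption))

/-- Six parameters with product `α ^ 4`. As `r → 1`, two pairs of poles of the integrand, at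
`± I r ^ 2` and `± I r ^ (-2)`, pinch the unit circle. -/
noncomputable def pinchedParameters (α : ℂ) (r : ℝ) : Multiset ℂ :=
  (I * r ^ 2) ::ₘ (-(I * r ^ 2)) ::ₘ Multiset.replicate 4 (α / r)

lemma card_pinchedParameters (α : ℂ) (r : ℝ) : (pinchedParameters α r).card = 6 := by
  simp [pinchedParameters]

lemma prod_pinchedParameters (α : ℂ) {r : ℝ} (hr : r ≠ 0) :
    (pinchedParameters α r).prod = α ^ 4 := by
  have : (r : ℂ) ≠ 0 := ofReal_ne_zero.2 hr
  simp only [pinchedParameters, Multiset.prod_cons, Multiset.prod_replicate]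
  field_simp
  linear_combination -α ^ 4 * I_sq

lemma mem_annulus_of_mem_pinchedParameters {α x : ℂ} {r : ℝ} (hα : α ≠ 0) (hαr : ‖α‖ < r)
    (hr : r < 1) (hx : x ∈ pinchedParameters α r) : x ∈ annulus 0 1 := by
  have hr0 : 0 < r := (norm_nonneg α).trans_lt hαr
  have hsq : 0 < r ^ 2 ∧ r ^ 2 < 1 := ⟨by positivity, pow_lt_one₀ hr0.le hr two_ne_zero⟩
  simp only [pinchedParameters, Multiset.mem_cons, Multiset.mem_replicate] at hx
  rcases hx with rfl | rfl | ⟨-, rfl⟩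
  · simpa [annulus, abs_of_pos hr0] using hsq
  · simpa [annulus, abs_of_pos hr0] using hsq
  · exact div_mem_annulus hα (by rwa [norm_real, Real.norm_of_nonneg hr0.le])

lemma half_poissonKernel_add_poissonKernel_neg {x z : ℂ} (hx : conj x = -x) (hx1 : ‖x‖ < 1)
    (hz : ‖z‖ = 1) :
    ((poissonKernel 0 x z : ℂ) + poissonKernel 0 (-x) z) / 2 =
      (1 - x ^ 4) / ((1 - x * z) * (1 - x / z) * ((1 - -x * z) * (1 - -x / z))) := by
  have hz0 : z ≠ 0 := norm_ne_zero_iff.1 (hz ▸ one_ne_zero)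
  have h1 : 1 - x * z ≠ 0 := one_sub_ne_zero_of_norm_lt_one (by simpa [hz])
  have h2 : 1 - x / z ≠ 0 := one_sub_ne_zero_of_norm_lt_one (by simpa [hz])
  have h3 : 1 - -x * z ≠ 0 := one_sub_ne_zero_of_norm_lt_one (by simpa [hz])
  have h4 : 1 - -x / z ≠ 0 := one_sub_ne_zero_of_norm_lt_one (by simpa [hz])
  rw [ofReal_poissonKernel_zero x hz, ofReal_poissonKernel_zero (-x) hz, map_neg, hx, neg_neg,
    div_add_div _ _ (mul_ne_zero h2 h3) (mul_ne_zero h4 h1), div_div, div_eq_div_iff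
      (mul_ne_zero (mul_ne_zero (mul_ne_zero h2 h3) (mul_ne_zero h4 h1)) two_ne_zero)
      (mul_ne_zero (mul_ne_zero h1 h2) (mul_ne_zero h3 h4))]
  field_simp
  ring

/-- The integrand of the elliptic beta integral at `pinchedParameters α r`, with its four factors
that become singular at `r = 1` regularised. -/
noncomputable def pinchedIntegrand (p q α : ℂ) (r : ℝ) (z : ℂ) : ℂ :=
  egammaRegPair p q (I * r ^ 2) z * egammaRegPair p q (-(I * r ^ 2)) z *
    egammaPair p q (α / r) z ^ 4 * betaWeight p q z

lemma continuousOn_pinchedIntegrand (hp : ‖p‖ < 1) (hq : ‖q‖ < 1) {α : ℂ} {r₀ : ℝ} (hα : α ≠ 0)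
    (hαr : ‖α‖ < r₀) :
    ContinuousOn (Function.uncurry (pinchedIntegrand p q α))
      (Set.Icc r₀ 1 ×ˢ Metric.sphere 0 1) := by
  have hr₀ : 0 < r₀ := (norm_nonneg α).trans_lt hαr
  have hne (r : ℝ) (hr : r ∈ Set.Icc r₀ 1) : (r : ℂ) ≠ 0 :=
    ofReal_ne_zero.2 (hr₀.trans_le hr.1).ne'
  have hreg {u : ℂ} (hu : ‖u‖ = 1) :
      ContinuousOn (fun y : ℝ × ℂ ↦ egammaRegPair p q (u * y.1 ^ 2) y.2)
        (Set.Icc r₀ 1 ×ˢ Metric.sphere 0 1) := by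
    refine (continuousOn_egammaRegPair hp hq).comp (f := fun y : ℝ × ℂ ↦ (u * y.1 ^ 2, y.2))
      (by fun_prop) fun y hy ↦ ⟨⟨?_, ?_⟩, hy.2⟩
    · have := hr₀.trans_le hy.1.1
      simpa [hu, abs_of_pos this] using hy.1.2
    · exact mul_ne_zero (norm_ne_zero_iff.1 (hu ▸ one_ne_zero)) (pow_ne_zero 2 (hne _ hy.1))
  have hpair : ContinuousOn (fun y : ℝ × ℂ ↦ egammaPair p q (α / y.1) y.2)
      (Set.Icc r₀ 1 ×ˢ Metric.sphere 0 1) := by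
    refine (continuousOn_egammaPair hp hq).comp (f := fun y : ℝ × ℂ ↦ (α / y.1, y.2))
      (.prodMk (.div (by fun_prop) (by fun_prop) fun y hy ↦ hne _ hy.1) (by fun_prop))
      fun y hy ↦ ⟨div_mem_annulus hα ?_, hy.2⟩
    rw [norm_real]
    exact hαr.trans_le (hy.1.1.trans (le_abs_self _))
  have hweight : ContinuousOn (fun y : ℝ × ℂ ↦ betaWeight p q y.2)
      (Set.Icc r₀ 1 ×ˢ Metric.sphere 0 1) :=
    (continuousOn_betaWeight hp hq).comp (by fun_prop) fun y hy ↦ hy.2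
  have hneg := hreg (u := -I) (by simp)
  simp only [neg_mul] at hneg
  exact (((hreg norm_I).mul hneg).mul (hpair.pow 4)).mul hweight

lemma pinchedIntegrand_one (hp : ‖p‖ < 1) (hq : ‖q‖ < 1) (α : ℂ) {z : ℂ} (hz : z = I ∨ z = -I) :
    pinchedIntegrand p q α 1 z = 4 * egammaReg p q 1 ^ 2 * egammaPair p q α I ^ 4 := by
  have hweight := egammaReg_neg_one_sq_mul_betaWeight hp hq (z := z)
    (by rcases hz with rfl | rfl <;> simp)
  have hpair : egammaPair p q α z = egammaPair p q α I := by
    rcases hz with rfl | rfl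
    · rfl
    · simp only [egammaPair, div_neg, div_I, mul_neg, neg_neg, mul_comm]
  have hreg : egammaRegPair p q I z * egammaRegPair p q (-I) z =
      egammaReg p q 1 ^ 2 * egammaReg p q (-1) ^ 2 := by
    rcases hz with rfl | rfl <;>
    · simp only [egammaRegPair, div_neg, div_I, mul_neg, neg_mul, neg_neg, I_mul_I]
      ring
  rw [pinchedIntegrand, ofReal_one, one_pow, mul_one, div_one, hpair, hreg]
  linear_combination egammaReg p q 1 ^ 2 * egammaPair p q α I ^ 4 * hweight

lemma one_sub_mul_ellipticBetaIntegrand_pinchedParameters (hp : ‖p‖ < 1) (hq : ‖q‖ < 1) (α : ℂ)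
    {r : ℝ} (hr : 0 < r) (hr1 : r < 1) {z : ℂ} (hz : ‖z‖ = 1) :
    (1 - (r : ℂ) ^ 8) * ellipticBetaIntegrand p q (pinchedParameters α r) z =
      (poissonKernel 0 (I * r ^ 2) z • pinchedIntegrand p q α r z +
        poissonKernel 0 (-(I * r ^ 2)) z • pinchedIntegrand p q α r z) / 2 := by
  have hkernel := half_poissonKernel_add_poissonKernel_neg (x := I * r ^ 2) (by simp)
    (by simpa [abs_of_pos hr] using pow_lt_one₀ hr.le hr1 two_ne_zero) hz
  have hpow : (I * (r : ℂ) ^ 2) ^ 4 = r ^ 8 := by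
    rw [mul_pow, I_pow_four]
    ring
  rw [hpow] at hkernel
  rw [real_smul, real_smul, ← add_mul, mul_div_right_comm, hkernel]
  simp only [ellipticBetaIntegrand, pinchedParameters, pinchedIntegrand, Multiset.map_cons,
    Multiset.prod_cons, Multiset.map_replicate, Multiset.prod_replicate,
    egammaPair_eq_egammaRegPair_div hp hq (I * r ^ 2),
    egammaPair_eq_egammaRegPair_div hp hq (-(I * r ^ 2)), div_eq_mul_inv, mul_inv]
  ring

lemma one_sub_mul_ellipticBetaIntegral_pinchedParameters (hp : ‖p‖ < 1) (hq : ‖q‖ < 1) {α : ℂ}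
    {r : ℝ} (hα : α ≠ 0) (hαr : ‖α‖ < r) (hr1 : r < 1) :
    (1 - (r : ℂ) ^ 8) * ellipticBetaIntegral p q (pinchedParameters α r) =
      (circleAverage (poissonKernel 0 (I * r ^ 2) • pinchedIntegrand p q α r) 0 1 +
        circleAverage (poissonKernel 0 (-(I * r ^ 2)) • pinchedIntegrand p q α r) 0 1) / 2 := by
  have hr : 0 < r := (norm_nonneg α).trans_lt hαr
  have hcont : ContinuousOn (pinchedIntegrand p q α r) (Metric.sphere 0 1) :=
    (continuousOn_pinchedIntegrand hp hq hα hαr).comp (f := fun z ↦ (r, z)) (by fun_prop)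
      fun z hz ↦ ⟨⟨le_rfl, hr1.le⟩, hz⟩
  have hint (x : ℂ) (hx : ‖x‖ < 1) :
      CircleIntegrable (poissonKernel 0 x • pinchedIntegrand p q α r) 0 1 :=
    ((continuousOn_poissonKernel_zero hx).smul hcont).circleIntegrable zero_le_one
  have hnorm : ‖I * (r : ℂ) ^ 2‖ < 1 := by
    simpa [abs_of_pos hr] using pow_lt_one₀ hr.le hr1 two_ne_zero
  rw [ellipticBetaIntegral, ← circleAverage_const_mul,
    ← circleAverage_add (hint _ hnorm) (hint _ (by rwa [norm_neg])), div_eq_inv_mul,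
    ← circleAverage_const_mul]
  refine circleAverage_congr_sphere fun z hz ↦ ?_
  exact (one_sub_mul_ellipticBetaIntegrand_pinchedParameters hp hq α hr hr1
    (by simpa using hz)).trans (div_eq_inv_mul _ _)

lemma tendsto_one_sub_mul_ellipticBetaIntegral_pinchedParameters (hp : ‖p‖ < 1) (hq : ‖q‖ < 1)
    {α : ℂ} (hα : α ∈ annulus 0 1) :
    Tendsto (fun r : ℝ ↦ (1 - (r : ℂ) ^ 8) * ellipticBetaIntegral p q (pinchedParameters α r))
      (𝓝[<] 1) (𝓝 (4 * egammaReg p q 1 ^ 2 * egammaPair p q α I ^ 4)) := by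
  have hα0 := ne_zero_of_mem_annulus le_rfl hα
  obtain ⟨r₀, hαr₀, hr₀⟩ := exists_between hα.2
  have hlim (ζ : ℂ) (hζ : ζ = I ∨ ζ = -I) :
      Tendsto
        (fun r : ℝ ↦ circleAverage (poissonKernel 0 (ζ * r ^ 2) • pinchedIntegrand p q α r) 0 1)
        (𝓝[<] 1) (𝓝 (4 * egammaReg p q 1 ^ 2 * egammaPair p q α I ^ 4)) := by
    have hζ1 : ‖ζ‖ = 1 := by rcases hζ with rfl | rfl <;> simp
    have hcont : Continuous fun r : ℝ ↦ ζ * (r : ℂ) ^ 2 := by fun_prop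
    have := tendsto_circleAverage_poissonKernel_smul_of_continuousOn (w := fun r ↦ ζ * r ^ 2) hr₀
      (fun r hr ↦ ?_) hcont.continuousWithinAt (by simp [hζ1])
      (continuousOn_pinchedIntegrand hp hq hα0 hαr₀)
    · simpa only [ofReal_one, one_pow, mul_one, pinchedIntegrand_one hp hq α hζ] using this
    · have hr0 : 0 ≤ r := ((norm_nonneg α).trans hαr₀.le).trans hr.1
      simpa [hζ1, abs_of_nonneg hr0] using pow_lt_one₀ hr0 hr.2 two_ne_zero
  have hmean := ((hlim I (.inl rfl)).add (hlim (-I) (.inr rfl))).div_const 2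
  rw [add_self_div_two] at hmean
  refine hmean.congr' ?_
  filter_upwards [Ioo_mem_nhdsLT hα.2] with r hr
  rw [one_sub_mul_ellipticBetaIntegral_pinchedParameters hp hq hα0 hr.1 hr.2]
  simp only [neg_mul]

lemma pairProduct_pinchedParameters (α : ℂ) {r : ℝ} (hr : r ≠ 0) :
    pairProduct p q (pinchedParameters α r) =
      egamma (r ^ 4) p q * egammaPair p q (r * α) I ^ 4 * egamma ((α / r) ^ 2) p q ^ 6 := by
  have hr0 : (r : ℂ) ≠ 0 := ofReal_ne_zero.2 hr
  have hpair : I * r ^ 2 * -(I * r ^ 2) = (r : ℂ) ^ 4 := by linear_combination -(r : ℂ) ^ 4 * I_sq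
  have hpos : I * r ^ 2 * (α / r) = r * α * I := by field_simp
  have hneg : -(I * r ^ 2) * (α / r) = r * α / I := by
    rw [div_I]
    field_simp
  simp only [pinchedParameters, pairProduct_cons, Multiset.replicate_succ, Multiset.map_cons,
    Multiset.prod_cons, Multiset.replicate_zero, Multiset.map_zero, Multiset.prod_zero, hpair, hpos,
    hneg, pairProduct_zero, egammaPair, ← pow_two]
  ring

lemma tendsto_one_sub_mul_pairProduct_pinchedParameters (hp : ‖p‖ < 1) (hq : ‖q‖ < 1) {α : ℂ}
    (hα : α ∈ annulus 0 1) (hαpq : α ^ 4 = p * q) :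
    Tendsto (fun r : ℝ ↦ (1 - (r : ℂ) ^ 8) * pairProduct p q (pinchedParameters α r)) (𝓝[<] 1)
      (𝓝 (2 * egammaReg p q 1 * egammaPair p q α I ^ 4)) := by
  have hα0 := ne_zero_of_mem_annulus le_rfl hα
  have hα2 : ‖α ^ 2‖ < 1 := by
    rw [norm_pow]
    exact pow_lt_one₀ (norm_nonneg α) hα.2 two_ne_zero
  have hreflection : egamma (α ^ 2) p q ^ 6 = 1 := by
    have : egamma (α ^ 2) p q * egamma (α ^ 2) p q = 1 :=
      egamma_mul_egamma_eq_one hp hq (hαpq ▸ pow_ne_zero 4 hα0) (by rw [← hαpq]; ring) hα2 hα2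
    linear_combination (egamma (α ^ 2) p q ^ 4 + egamma (α ^ 2) p q ^ 2 + 1) * this
  have hreg : ContinuousAt (fun r : ℝ ↦ egammaReg p q (r ^ 4)) 1 :=
    (continuousAt_egammaReg hp hq (by simp) (by simp)).comp (f := fun r : ℝ ↦ (r : ℂ) ^ 4)
      (by fun_prop)
  have hpair : ContinuousAt (fun r : ℝ ↦ egammaPair p q (r * α) I) 1 :=
    (differentiableAt_egammaPair_left hp hq (by simpa) norm_I).continuousAt.comp
      (f := fun r : ℝ ↦ r * α) (by fun_prop)
  have hsquare : ContinuousAt (fun r : ℝ ↦ egamma ((α / r) ^ 2) p q) 1 :=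
    (differentiableAt_egamma hp hq (by simpa) (by simpa using hα2)).continuousAt.comp
      (f := fun r : ℝ ↦ (α / r) ^ 2) (by fun_prop (disch := simp))
  have hpoly : ContinuousAt (fun r : ℝ ↦ 1 + (r : ℂ) ^ 4) 1 := by fun_prop
  have hcont : ContinuousAt (fun r : ℝ ↦ (1 + (r : ℂ) ^ 4) * egammaReg p q (r ^ 4) *
      egammaPair p q (r * α) I ^ 4 * egamma ((α / r) ^ 2) p q ^ 6) 1 :=
    ((hpoly.mul hreg).mul (hpair.pow 4)).mul (hsquare.pow 6)
  have hlim := hcont.continuousWithinAt (s := Set.Iio 1)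
  simp only [ContinuousWithinAt, ofReal_one, one_pow, one_mul, div_one, hreflection, mul_one,
    one_add_one_eq_two] at hlim
  refine hlim.congr' ?_
  filter_upwards [Ioo_mem_nhdsLT one_pos] with r hr
  have : (1 : ℂ) - r ^ 4 ≠ 0 := one_sub_ne_zero_of_norm_lt_one (by
    simpa [abs_of_pos hr.1] using pow_lt_one₀ hr.1.le hr.2 four_ne_zero)
  rw [pairProduct_pinchedParameters α hr.1.ne', egamma_eq_egammaReg_div hp hq (r ^ 4)]
  field_simp
  ring

lemma egammaPair_I_ne_zero (hp : ‖p‖ < 1) (hq : ‖q‖ < 1) {α : ℂ} (hα : α ∈ annulus 0 1)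
    (hαpq : α ^ 4 = p * q) : egammaPair p q α I ≠ 0 := by
  have hlt : ‖p * q‖ < ‖α‖ := by
    rw [← hαpq, norm_pow]
    exact pow_lt_self_of_lt_one₀ hα.1 hα.2 (by norm_num)
  exact mul_ne_zero (egamma_ne_zero hp hq (by simpa using hlt) (by simpa using hα.2))
    (egamma_ne_zero hp hq (by simpa using hlt) (by simpa using hα.2))

theorem betaRatio_eq (hp0 : p ≠ 0) (hp : ‖p‖ < 1) (hq0 : q ≠ 0) (hq : ‖q‖ < 1) {t : Multiset ℂ}
    (hcard : t.card = 6) (ht : ∀ x ∈ t, x ∈ annulus 0 1) (hprod : t.prod = p * q) :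
    betaRatio p q t = 2 / (qpoch p p * qpoch q q) := by
  obtain ⟨c, hc⟩ := exists_forall_betaRatio_eq hp0 hp hq0 hq
  obtain ⟨α, hαpq⟩ := IsAlgClosed.exists_pow_nat_eq (p * q) four_pos
  have hα0 : α ≠ 0 := by
    rintro rfl
    exact mul_ne_zero hp0 hq0 (by simpa using hαpq.symm)
  have hα : α ∈ annulus 0 1 := by
    refine ⟨norm_pos_iff.2 hα0, lt_of_pow_lt_pow_left₀ 4 zero_le_one ?_⟩
    rw [← norm_pow, hαpq, one_pow]
    exact norm_mul_lt_one hp hq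
  have hlim := (tendsto_one_sub_mul_pairProduct_pinchedParameters hp hq hα hαpq).const_mul c
  have hlimits : 4 * egammaReg p q 1 ^ 2 * egammaPair p q α I ^ 4 =
      c * (2 * egammaReg p q 1 * egammaPair p q α I ^ 4) := by
    refine tendsto_nhds_unique ((tendsto_one_sub_mul_ellipticBetaIntegral_pinchedParameters hp hq
      hα).congr' ?_) hlim
    filter_upwards [Ioo_mem_nhdsLT hα.2] with r hr
    have hr0 : r ≠ 0 := ((norm_nonneg α).trans_lt hr.1).ne'
    have hmem (x : ℂ) := mem_annulus_of_mem_pinchedParameters (x := x) hα0 hr.1 hr.2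
    have hprod := (prod_pinchedParameters α hr0).trans hαpq
    have hcard := card_pinchedParameters α r
    rw [← hc _ hcard hmem hprod, betaRatio, mul_left_comm,
      div_mul_cancel₀ _ (pairProduct_ne_zero hp hq hmem (by omega) hprod)]
  rw [hc t hcard ht hprod, ← mul_one_div, ← egammaReg_one hp hq]
  have hreg : egammaReg p q 1 ≠ 0 := by
    rw [egammaReg_one hp hq]
    exact one_div_ne_zero (mul_ne_zero (qpoch_ne_zero hp hp) (qpoch_ne_zero hq hq))
  have hpair := egammaPair_I_ne_zero hp hq hα hαpq
  refine mul_right_cancel₀ (mul_ne_zero (mul_ne_zero two_ne_zero hreg) (pow_ne_zero 4 hpair)) ?_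
  linear_combination -hlimits

end Evaluation

section FinsetIndexed

variable {p q : ℂ}

lemma pairProduct_map_univ (p q : ℂ) {n : ℕ} (t : Fin n → ℂ) :
    pairProduct p q (Finset.univ.val.map t) =
      ∏ j, ∏ k ∈ Finset.Ioi j, egamma (t j * t k) p q := by
  induction n with
  | zero => simp [pairProduct_zero]
  | succ n ih =>
    have huniv : Finset.univ.val.map t = t 0 ::ₘ Finset.univ.val.map fun j : Fin n ↦ t j.succ := by
      simp [Fin.univ_val_map, List.ofFn_succ]
    rw [huniv, pairProduct_cons, ih, Multiset.map_map, Fin.prod_univ_succ, Fin.prod_Ioi_zero]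
    simp only [Fin.prod_Ioi_succ, Function.comp_def, Finset.prod_map_val]

lemma ellipticBetaIntegrand_map_univ (hp : ‖p‖ < 1) (hq : ‖q‖ < 1) {ι : Type*} [Fintype ι]
    (t : ι → ℂ) {z : ℂ} (hz : ‖z‖ = 1) :
    ellipticBetaIntegrand p q (Finset.univ.val.map t) z =
      (∏ j, egamma (t j * z) p q * egamma (t j * z⁻¹) p q) /
        (egamma (z ^ 2) p q * egamma (z ^ 2)⁻¹ p q) := by
  rw [div_eq_mul_one_div, one_div_egamma_mul_egamma_inv hp hq (by rw [norm_pow, hz, one_pow]),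
    ellipticBetaIntegrand, Multiset.map_map, Finset.prod_map_val, betaWeight]
  rfl

lemma ellipticBetaIntegral_map_univ (hp : ‖p‖ < 1) (hq : ‖q‖ < 1) {ι : Type*} [Fintype ι]
    (t : ι → ℂ) :
    ellipticBetaIntegral p q (Finset.univ.val.map t) = (2 * π : ℂ)⁻¹ *
      ∫ u in (0 : ℝ)..(2 * π), (∏ j, egamma (t j * exp (u * I)) p q *
        egamma (t j * (exp (u * I))⁻¹) p q) /
          (egamma (exp (u * I) ^ 2) p q * egamma (exp (u * I) ^ 2)⁻¹ p q) := by
  simp only [ellipticBetaIntegral, circleAverage, circleMap_zero, ofReal_one, one_mul,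
    ellipticBetaIntegrand_map_univ hp hq t (norm_exp_ofReal_mul_I _), real_smul]
  simp only [ofReal_inv, ofReal_mul, ofReal_ofNat]

end FinsetIndexed

theorem elliptic_beta_integral (p q : ℂ) (hp0 : 0 < ‖p‖) (hp1 : ‖p‖ < 1)
    (hq0 : 0 < ‖q‖) (hq1 : ‖q‖ < 1)
    (t : Fin 6 → ℂ) (ht0 : ∀ j, t j ≠ 0) (ht1 : ∀ j, ‖t j‖ < 1)
    (hbal : ∏ j, t j = p * q) :
    (kappa p q * ∫ u in (0:ℝ)..(2 * Real.pi),
        (∏ j, egamma (t j * Complex.exp (u * Complex.I)) p q *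
            egamma (t j * (Complex.exp (u * Complex.I))⁻¹) p q) /
          (egamma (Complex.exp (u * Complex.I) ^ 2) p q *
            egamma ((Complex.exp (u * Complex.I) ^ 2)⁻¹) p q) * Complex.I)
      = ∏ j : Fin 6, ∏ k ∈ Finset.Ioi j, egamma (t j * t k) p q := by
  have hp : p ≠ 0 := norm_pos_iff.1 hp0
  have hq : q ≠ 0 := norm_pos_iff.1 hq0
  have hmem : ∀ x ∈ Finset.univ.val.map t, x ∈ annulus 0 1 :=
    Multiset.forall_mem_map_iff.2 fun j _ ↦ ⟨norm_pos_iff.2 (ht0 j), ht1 j⟩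
  have hprod : (Finset.univ.val.map t).prod = p * q := hbal
  have hintegral : ellipticBetaIntegral p q (Finset.univ.val.map t) =
      2 / (qpoch p p * qpoch q q) * pairProduct p q (Finset.univ.val.map t) :=
    (div_eq_iff (pairProduct_ne_zero hp1 hq1 hmem (by simp) hprod)).1
      (betaRatio_eq hp hp1 hq hq1 (by simp) hmem hprod)
  rw [ellipticBetaIntegral_map_univ hp1 hq1, inv_mul_eq_iff_eq_mul₀ (by simp)] at hintegral
  rw [intervalIntegral.integral_mul_const, hintegral, ← pairProduct_map_univ, kappa]
  field_simp [qpoch_ne_zero hp1 hp1, qpoch_ne_zero hq1 hq1]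
  norm_num
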